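/- arXiv:1903.06825 — 3 statements merged into one kernel-verified Lean document; each statement's English description precedes it below -/
import Mathlib

section
/- There are infinitely many composite natural numbers n such that n divides P(n), where P is the Perrin sequence. -/
/-- The Perrin sequence: `P 0 = 3`, `P 1 = 0`, `P 2 = 2`, and
`P (k+3) = P (k+1) + P k`. -/
def perrin : ℕ → ℤ
  | 0 => 3
  | 1 => 0
  | 2 => 2
  | (k + 3) => perrin (k + 1) + perrin k


/-- Companion matrix of `x^3 - x - 1`. -/
def pA (R : Type) [CommRing R] : Matrix (Fin 3) (Fin 3) R := !![0, 0, 1; 1, 0, 1; 0, 1, 0]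

/-- The element `a + b A + c A^2`. -/
def pT (R : Type) [CommRing R] (a b c : R) : Matrix (Fin 3) (Fin 3) R :=
  a • (1 : Matrix (Fin 3) (Fin 3) R) + b • pA R + c • (pA R * pA R)

theorem pT_eq (R : Type) [CommRing R] (a b c : R) :
    pT R a b c = !![a, c, b; b, a + c, b + c; c, b, a + c] := by
  ext i j
  fin_cases i <;> fin_cases j <;> simp [pT, pA, Matrix.mul_apply, Fin.sum_univ_three]

theorem pA_dbl {R : Type} [CommRing R] {k : ℕ} {a b c u v w : R} (h : pA R ^ k = pT R a b c)
    (hu : a * a + 2 * b * c = u) (hv : 2 * a * b + 2 * b * c + c * c = v)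
    (hw : b * b + 2 * a * c + c * c = w) : pA R ^ (2 * k) = pT R u v w := by
  subst hu hv hw
  rw [two_mul, pow_add, h]
  simp only [pT_eq]
  ext i j
  fin_cases i <;> fin_cases j <;> simp [Matrix.mul_apply, Fin.sum_univ_three] <;> ring

theorem pA_succ {R : Type} [CommRing R] {k : ℕ} {a b c v : R} (h : pA R ^ k = pT R a b c)
    (hv : a + c = v) : pA R ^ (k + 1) = pT R c v b := by
  subst hv
  rw [pow_succ, h]
  simp only [pT_eq]
  ext i j
  fin_cases i <;> fin_cases j <;> simp [pA, Matrix.mul_apply, Fin.sum_univ_three] <;> ring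

theorem pA_cube (R : Type) [CommRing R] : pA R ^ 3 = pA R + 1 := by
  ext i j
  fin_cases i <;> fin_cases j <;>
    simp [pA, pow_succ, Matrix.mul_apply, Fin.sum_univ_three]

theorem perrin_trace (R : Type) [CommRing R] : ∀ n : ℕ,
    ((perrin n : ℤ) : R) = Matrix.trace (pA R ^ n)
  | 0 => by simp [perrin]
  | 1 => by simp [perrin, pA, Matrix.trace, Fin.sum_univ_three]
  | 2 => by
      simp [perrin, pA, pow_two, Matrix.trace, Fin.sum_univ_three, Matrix.mul_apply]
      norm_num
  | (k + 3) => by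
      rw [perrin, Int.cast_add, perrin_trace R (k + 1), perrin_trace R k, pow_add _ k 3, pA_cube,
        mul_add, mul_one, ← pow_succ, Matrix.trace_add]

theorem pA_map (R : Type) [CommRing R] : (Int.castRingHom R).mapMatrix (pA ℤ) = pA R := by
  ext i j
  fin_cases i <;> fin_cases j <;> simp [pA]

theorem pA_det : (pA ℤ).det = 1 := by
  simp [pA, Matrix.det_fin_three]

/-- If `D ^ 3 = 1` modulo `q` and `det D = 1`, then `D₀₁ · tr D = 0` modulo `q`. -/
theorem key (D C : Matrix (Fin 3) (Fin 3) ℤ) (q : ℤ) (hd : D.det = 1)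
    (h : D ^ 3 = 1 + q • C) : q ∣ D 0 1 * D.trace := by
  have h1 : D.adjugate * D = 1 := by rw [Matrix.adjugate_mul, hd, one_smul]
  have h2 : D * D = D.adjugate + q • (D.adjugate * C) := by
    calc D * D = (D.adjugate * D) * (D * D) := by rw [h1, one_mul]
      _ = D.adjugate * D ^ 3 := by rw [pow_succ, pow_two]; simp only [mul_assoc]
      _ = _ := by rw [h, mul_add, mul_one, Matrix.mul_smul]
  have h3 := congrFun (congrFun h2 0) 1
  have h4 : D.adjugate 0 1 = -(D 0 1 * D 2 2 - D 0 2 * D 2 1) := by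
    rw [Matrix.adjugate_fin_three]
    simp
    ring
  refine ⟨(D.adjugate * C) 0 1, ?_⟩
  rw [Matrix.add_apply, h4, Matrix.smul_apply, Matrix.mul_apply, Fin.sum_univ_three,
    smul_eq_mul] at h3
  rw [Matrix.trace, Fin.sum_univ_three]
  simp only [Matrix.diag_apply]
  linear_combination h3

theorem one_add_pow (q : ℤ) (C : Matrix (Fin 3) (Fin 3) ℤ) (n : ℕ) :
    ∃ C2, (1 + q • C) ^ n = 1 + q • C2 := by
  induction n with
  | zero => exact ⟨0, by simp⟩
  | succ n ih =>
    obtain ⟨C2, h⟩ := ih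
    refine ⟨C + C2 * (1 + q • C), ?_⟩
    rw [pow_succ, h, add_mul, one_mul, smul_add, Matrix.smul_mul, add_assoc]

theorem lift_step (p q : ℤ) (n : ℕ) (hn : (n : ℤ) = p) (hp : p ∣ q)
    (X C : Matrix (Fin 3) (Fin 3) ℤ)
    (h : X = 1 + q • C) : ∃ C2, X ^ n = 1 + (q * p) • C2 := by
  have hs : ∀ m : ℕ, ∃ E, ∑ i ∈ Finset.range m, X ^ i = (m : ℤ) • 1 + q • E := by
    intro m
    induction m with
    | zero => exact ⟨0, by simp⟩
    | succ m ih =>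
      obtain ⟨E, hE⟩ := ih
      obtain ⟨F, hF⟩ := one_add_pow q C m
      refine ⟨E + F, ?_⟩
      rw [Finset.sum_range_succ, hE, h, hF, smul_add]
      push_cast
      rw [add_smul, one_smul]
      abel
  obtain ⟨E, hE⟩ := hs n
  obtain ⟨d, rfl⟩ := hp
  refine ⟨C * (1 + d • E), ?_⟩
  have hg := mul_geom_sum X n
  rw [hE, hn] at hg
  have : X - 1 = (p * d) • C := by rw [h]; abel
  rw [this] at hg
  rw [← sub_eq_iff_eq_add', ← hg]
  simp only [mul_add, Matrix.smul_mul, Matrix.mul_smul, smul_add, smul_smul, mul_one]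
  rw [show p * d * (p * d) = p * d * p * d by ring, show p * (p * d) = p * d * p by ring]

theorem lift_all (X C : Matrix (Fin 3) (Fin 3) ℤ) (h : X = 1 + (1453 : ℤ) • C) (a : ℕ) :
    ∃ C2, X ^ (1453 ^ a) = 1 + ((1453 : ℤ) ^ (a + 1)) • C2 := by
  induction a with
  | zero => exact ⟨C, by simpa using h⟩
  | succ a ih =>
    obtain ⟨C2, h2⟩ := ih
    obtain ⟨C3, h3⟩ := lift_step 1453 (1453 ^ (a + 1)) 1453 (by norm_num)
      (dvd_pow_self _ (Nat.succ_ne_zero a)) _ _ h2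
    exact ⟨C3, by rw [pow_succ 1453 a, pow_mul, h3, pow_succ (1453 : ℤ) (a + 1)]⟩

theorem pA_242 : pA (ZMod 1453) ^ 242 = pT (ZMod 1453) 591 1277 1293 := by
  have h1 : pA (ZMod 1453) ^ 1 = pT (ZMod 1453) 0 1 0 := by simp [pT]
  have h2 : pA (ZMod 1453) ^ 2 = pT (ZMod 1453) 0 0 1 := pA_dbl h1 (by decide) (by decide) (by decide)
  have h3 : pA (ZMod 1453) ^ 3 = pT (ZMod 1453) 1 1 0 := pA_succ h2 (by decide)
  have h6 : pA (ZMod 1453) ^ 6 = pT (ZMod 1453) 1 2 1 := pA_dbl h3 (by decide) (by decide) (by decide)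
  have h7 : pA (ZMod 1453) ^ 7 = pT (ZMod 1453) 1 2 2 := pA_succ h6 (by decide)
  have h14 : pA (ZMod 1453) ^ 14 = pT (ZMod 1453) 9 16 12 := pA_dbl h7 (by decide) (by decide) (by decide)
  have h15 : pA (ZMod 1453) ^ 15 = pT (ZMod 1453) 12 21 16 := pA_succ h14 (by decide)
  have h30 : pA (ZMod 1453) ^ 30 = pT (ZMod 1453) 816 1432 1081 := pA_dbl h15 (by decide) (by decide) (by decide)
  have h60 : pA (ZMod 1453) ^ 60 = pT (ZMod 1453) 23 590 1040 := pA_dbl h30 (by decide) (by decide) (by decide)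
  have h120 : pA (ZMod 1453) ^ 120 = pT (ZMod 1453) 1397 969 1292 := pA_dbl h60 (by decide) (by decide) (by decide)
  have h121 : pA (ZMod 1453) ^ 121 = pT (ZMod 1453) 1292 1236 969 := pA_succ h120 (by decide)
  have h242 : pA (ZMod 1453) ^ 242 = pT (ZMod 1453) 591 1277 1293 := pA_dbl h121 (by decide) (by decide) (by decide)
  exact h242

theorem pA_726 : pA (ZMod 1453) ^ 726 = pT (ZMod 1453) 1 0 0 := by
  have h1 : pA (ZMod 1453) ^ 1 = pT (ZMod 1453) 0 1 0 := by simp [pT]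
  have h2 : pA (ZMod 1453) ^ 2 = pT (ZMod 1453) 0 0 1 := pA_dbl h1 (by decide) (by decide) (by decide)
  have h4 : pA (ZMod 1453) ^ 4 = pT (ZMod 1453) 0 1 1 := pA_dbl h2 (by decide) (by decide) (by decide)
  have h5 : pA (ZMod 1453) ^ 5 = pT (ZMod 1453) 1 1 1 := pA_succ h4 (by decide)
  have h10 : pA (ZMod 1453) ^ 10 = pT (ZMod 1453) 3 5 4 := pA_dbl h5 (by decide) (by decide) (by decide)
  have h11 : pA (ZMod 1453) ^ 11 = pT (ZMod 1453) 4 7 5 := pA_succ h10 (by decide)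
  have h22 : pA (ZMod 1453) ^ 22 = pT (ZMod 1453) 86 151 114 := pA_dbl h11 (by decide) (by decide) (by decide)
  have h44 : pA (ZMod 1453) ^ 44 = pT (ZMod 1453) 1140 746 191 := pA_dbl h22 (by decide) (by decide) (by decide)
  have h45 : pA (ZMod 1453) ^ 45 = pT (ZMod 1453) 191 1331 746 := pA_succ h44 (by decide)
  have h90 : pA (ZMod 1453) ^ 90 = pT (ZMod 1453) 1210 963 555 := pA_dbl h45 (by decide) (by decide) (by decide)
  have h180 : pA (ZMod 1453) ^ 180 = pT (ZMod 1453) 451 812 872 := pA_dbl h90 (by decide) (by decide) (by decide)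
  have h181 : pA (ZMod 1453) ^ 181 = pT (ZMod 1453) 872 1323 812 := pA_succ h180 (by decide)
  have h362 : pA (ZMod 1453) ^ 362 = pT (ZMod 1453) 30 648 52 := pA_dbl h181 (by decide) (by decide) (by decide)
  have h363 : pA (ZMod 1453) ^ 363 = pT (ZMod 1453) 52 82 648 := pA_succ h362 (by decide)
  have h726 : pA (ZMod 1453) ^ 726 = pT (ZMod 1453) 1 0 0 := pA_dbl h363 (by decide) (by decide) (by decide)
  exact h726

theorem pA_9240 : pA (ZMod 242) ^ 9240 = pT (ZMod 242) 1 0 0 := by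
  have h1 : pA (ZMod 242) ^ 1 = pT (ZMod 242) 0 1 0 := by simp [pT]
  have h2 : pA (ZMod 242) ^ 2 = pT (ZMod 242) 0 0 1 := pA_dbl h1 (by decide) (by decide) (by decide)
  have h4 : pA (ZMod 242) ^ 4 = pT (ZMod 242) 0 1 1 := pA_dbl h2 (by decide) (by decide) (by decide)
  have h8 : pA (ZMod 242) ^ 8 = pT (ZMod 242) 2 3 2 := pA_dbl h4 (by decide) (by decide) (by decide)
  have h9 : pA (ZMod 242) ^ 9 = pT (ZMod 242) 2 4 3 := pA_succ h8 (by decide)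
  have h18 : pA (ZMod 242) ^ 18 = pT (ZMod 242) 28 49 37 := pA_dbl h9 (by decide) (by decide) (by decide)
  have h36 : pA (ZMod 242) ^ 36 = pT (ZMod 242) 54 237 34 := pA_dbl h18 (by decide) (by decide) (by decide)
  have h72 : pA (ZMod 242) ^ 72 = pT (ZMod 242) 156 34 13 := pA_dbl h36 (by decide) (by decide) (by decide)
  have h144 : pA (ZMod 242) ^ 144 = pT (ZMod 242) 52 45 57 := pA_dbl h72 (by decide) (by decide) (by decide)
  have h288 : pA (ZMod 242) ^ 288 = pT (ZMod 242) 90 233 70 := pA_dbl h144 (by decide) (by decide) (by decide)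
  have h576 : pA (ZMod 242) ^ 576 = pT (ZMod 242) 64 84 157 := pA_dbl h288 (by decide) (by decide) (by decide)
  have h577 : pA (ZMod 242) ^ 577 = pT (ZMod 242) 157 221 84 := pA_succ h576 (by decide)
  have h1154 : pA (ZMod 242) ^ 1154 = pT (ZMod 242) 67 80 235 := pA_dbl h577 (by decide) (by decide) (by decide)
  have h1155 : pA (ZMod 242) ^ 1155 = pT (ZMod 242) 235 60 80 := pA_succ h1154 (by decide)
  have h2310 : pA (ZMod 242) ^ 2310 = pT (ZMod 242) 211 156 168 := pA_dbl h1155 (by decide) (by decide) (by decide)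
  have h4620 : pA (ZMod 242) ^ 4620 = pT (ZMod 242) 137 62 36 := pA_dbl h2310 (by decide) (by decide) (by decide)
  have h9240 : pA (ZMod 242) ^ 9240 = pT (ZMod 242) 1 0 0 := pA_dbl h4620 (by decide) (by decide) (by decide)
  exact h9240

theorem pA_res : pA (ZMod 242) ^ 7634 = pT (ZMod 242) 144 157 147 := by
  have h1 : pA (ZMod 242) ^ 1 = pT (ZMod 242) 0 1 0 := by simp [pT]
  have h2 : pA (ZMod 242) ^ 2 = pT (ZMod 242) 0 0 1 := pA_dbl h1 (by decide) (by decide) (by decide)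
  have h3 : pA (ZMod 242) ^ 3 = pT (ZMod 242) 1 1 0 := pA_succ h2 (by decide)
  have h6 : pA (ZMod 242) ^ 6 = pT (ZMod 242) 1 2 1 := pA_dbl h3 (by decide) (by decide) (by decide)
  have h7 : pA (ZMod 242) ^ 7 = pT (ZMod 242) 1 2 2 := pA_succ h6 (by decide)
  have h14 : pA (ZMod 242) ^ 14 = pT (ZMod 242) 9 16 12 := pA_dbl h7 (by decide) (by decide) (by decide)
  have h28 : pA (ZMod 242) ^ 28 = pT (ZMod 242) 223 90 132 := pA_dbl h14 (by decide) (by decide) (by decide)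
  have h29 : pA (ZMod 242) ^ 29 = pT (ZMod 242) 132 113 90 := pA_succ h28 (by decide)
  have h58 : pA (ZMod 242) ^ 58 = pT (ZMod 242) 12 192 101 := pA_dbl h29 (by decide) (by decide) (by decide)
  have h59 : pA (ZMod 242) ^ 59 = pT (ZMod 242) 101 113 192 := pA_succ h58 (by decide)
  have h118 : pA (ZMod 242) ^ 118 = pT (ZMod 242) 111 232 87 := pA_dbl h59 (by decide) (by decide) (by decide)
  have h119 : pA (ZMod 242) ^ 119 = pT (ZMod 242) 87 198 232 := pA_succ h118 (by decide)
  have h238 : pA (ZMod 242) ^ 238 = pT (ZMod 242) 221 100 54 := pA_dbl h119 (by decide) (by decide) (by decide)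
  have h476 : pA (ZMod 242) ^ 476 = pT (ZMod 242) 109 78 0 := pA_dbl h238 (by decide) (by decide) (by decide)
  have h477 : pA (ZMod 242) ^ 477 = pT (ZMod 242) 0 109 78 := pA_succ h476 (by decide)
  have h954 : pA (ZMod 242) ^ 954 = pT (ZMod 242) 64 98 57 := pA_dbl h477 (by decide) (by decide) (by decide)
  have h1908 : pA (ZMod 242) ^ 1908 = pT (ZMod 242) 22 103 63 := pA_dbl h954 (by decide) (by decide) (by decide)
  have h3816 : pA (ZMod 242) ^ 3816 = pT (ZMod 242) 152 183 168 := pA_dbl h1908 (by decide) (by decide) (by decide)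
  have h3817 : pA (ZMod 242) ^ 3817 = pT (ZMod 242) 168 78 183 := pA_succ h3816 (by decide)
  have h7634 : pA (ZMod 242) ^ 7634 = pT (ZMod 242) 144 157 147 := pA_dbl h3817 (by decide) (by decide) (by decide)
  exact h7634

theorem pA_726_int : ∃ C, pA ℤ ^ 726 = 1 + (1453 : ℤ) • C := by
  have h : ∀ i j, (1453 : ℤ) ∣ (pA ℤ ^ 726 - 1 : Matrix (Fin 3) (Fin 3) ℤ) i j := by
    intro i j
    have e : (Int.castRingHom (ZMod 1453)).mapMatrix (pA ℤ ^ 726 - 1) = 0 := by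
      rw [map_sub, map_pow, pA_map, pA_726, map_one]
      simp [pT]
    have e2 := congrFun (congrFun e i) j
    have := (ZMod.intCast_zmod_eq_zero_iff_dvd ((pA ℤ ^ 726 - 1 : Matrix (Fin 3) (Fin 3) ℤ) i j) 1453).1 (by simpa using e2)
    exact_mod_cast this
  choose C hC using h
  refine ⟨Matrix.of C, ?_⟩
  rw [← sub_eq_iff_eq_add']
  ext i j
  rw [hC]
  simp

theorem p_part (a : ℕ) : ((1453 : ℤ) ^ a) ∣ perrin (242 * 1453 ^ a) := by
  obtain ⟨C, hC⟩ := pA_726_int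
  obtain ⟨C2, hC2⟩ := lift_all _ _ hC a
  have hk := key (pA ℤ ^ (242 * 1453 ^ a)) C2 (1453 ^ (a + 1))
    (by rw [Matrix.det_pow, pA_det, one_pow])
    (by rw [← hC2, ← pow_mul, ← pow_mul]; congr 1; ring)
  rw [← perrin_trace ℤ] at hk
  have hcop : IsCoprime ((1453 : ℤ) ^ (a + 1)) ((pA ℤ ^ (242 * 1453 ^ a)) 0 1) := by
    apply IsCoprime.pow_left
    rw [Prime.coprime_iff_not_dvd (by rw [← Nat.cast_ofNat, ← Nat.prime_iff_prime_int]; norm_num)]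
    intro hd
    have hd2 := (ZMod.intCast_zmod_eq_zero_iff_dvd ((pA ℤ ^ (242 * 1453 ^ a)) 0 1) 1453).2
      (by exact_mod_cast hd)
    have e : (Int.castRingHom (ZMod 1453)).mapMatrix (pA ℤ ^ (242 * 1453 ^ a)) = pA _ ^ 242 := by
      rw [map_pow, pA_map]
      have h1 : 1453 ^ a % 3 = 1 := by rw [Nat.pow_mod]; simp
      have h2 : 242 * 1453 ^ a = 242 + 726 * (1453 ^ a / 3) := by omega
      rw [h2, pow_add, pow_mul, pA_726]
      simp [pT]
    rw [pA_242, pT_eq] at e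
    have e2 := congrFun (congrFun e 0) 1
    simp only [RingHom.mapMatrix_apply, Matrix.map_apply, eq_intCast] at e2
    rw [hd2] at e2
    revert e2
    simp
    decide
  exact (pow_dvd_pow _ (Nat.le_succ a)).trans
    ((hcop.dvd_of_dvd_mul_left (by simpa using hk)))

theorem m_part (k : ℕ) : (242 : ℤ) ∣ perrin (242 * 1453 ^ (3 + 12 * k)) := by
  have hm : 242 * 1453 ^ (3 + 12 * k) % 9240 = 7634 := by
    induction k with
    | zero => norm_num
    | succ k ih =>
      have : 242 * 1453 ^ (3 + 12 * (k + 1)) = (242 * 1453 ^ (3 + 12 * k)) * 1453 ^ 12 := by ring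
      rw [this, Nat.mul_mod, ih]
      norm_num
  generalize 242 * 1453 ^ (3 + 12 * k) = n at hm ⊢
  have h := perrin_trace (ZMod 242) n
  have h1 : pT (ZMod 242) 1 0 0 = 1 := by simp [pT]
  have h2 : n = 9240 * (n / 9240) + 7634 := by omega
  have h3 : pA (ZMod 242) ^ n = pA (ZMod 242) ^ 7634 := by
    rw [h2, pow_add, pow_mul, pA_9240, h1, one_pow, one_mul]
  rw [h3, pA_res] at h
  have := (ZMod.intCast_zmod_eq_zero_iff_dvd _ 242).1 (h.trans (by
    rw [pT_eq, Matrix.trace, Fin.sum_univ_three]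
    simp
    decide))
  exact_mod_cast this

/-- There are infinitely many composite numbers `n` (Perrin pseudoprimes) with
`n ∣ P n`. -/
theorem infinitely_many_perrin_pseudoprimes :
    {n : ℕ | 1 < n ∧ ¬ n.Prime ∧ (n : ℤ) ∣ perrin n}.Infinite := by
  refine Set.infinite_of_injective_forall_mem (f := fun k : ℕ => 242 * 1453 ^ (3 + 12 * k)) ?_ ?_
  · intro a b h
    have h2 : (1453 : ℕ) ^ (3 + 12 * a) = 1453 ^ (3 + 12 * b) :=
      Nat.eq_of_mul_eq_mul_left (by norm_num : 0 < 242) h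
    have := Nat.pow_right_injective (le_refl 2 |>.trans (by norm_num : 2 ≤ 1453)) h2
    omega
  · intro k
    have hpos : 0 < 1453 ^ (3 + 12 * k) := by positivity
    refine ⟨by omega, ?_, ?_⟩
    · apply Nat.not_prime_mul (by norm_num)
      exact (Nat.one_lt_pow (by omega) (by norm_num)).ne'
    · push_cast
      refine IsCoprime.mul_dvd ?_ (m_part k) (p_part _)
      apply IsCoprime.pow_right
      rw [Int.isCoprime_iff_gcd_eq_one]
      norm_num
end

section
/- Let G be a finite abelian group and let m be the maximal order of an element of G (equivalently, the exponent of G). Then every multiset of elements of G whose cardinality is at least m·(1 + log(|G|/m)) contains a nonempty submultiset whose product is the identity. Equivalently, n(G) < m·(1 + log(|G|/m)), where n(G) denotes the length of the longest sequence of (not necessarily distinct) elements of G for which no nonempty subsequence has product equal to the identity. -/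
open Finset in
theorem greedy_step {G : Type*} [CommGroup G] [Fintype G] (m : ℕ) (hm : m = Monoid.exponent G)
    (hm0 : 0 < m) (X : Finset (AddChar (Additive G) ℂ)) (g : G) :
    ∃ a : ℂ, a ≠ 0 ∧ (X.card : ℝ) / m ≤ ((X.filter (fun χ => χ (Additive.ofMul g) = a)).card : ℝ) := by
  classical
  have hroot : ∀ χ ∈ X, χ (Additive.ofMul g) ∈ Polynomial.nthRootsFinset m (1 : ℂ) := by
    intro χ _
    rw [Polynomial.mem_nthRootsFinset hm0, ← AddChar.map_nsmul_eq_pow, ← ofMul_pow, hm,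
      Monoid.pow_exponent_eq_one]
    simp
  have hcard : (Polynomial.nthRootsFinset m (1 : ℂ)).card ≤ m := by
    rw [Polynomial.nthRootsFinset_def]
    exact (Multiset.toFinset_card_le _).trans (Polynomial.card_nthRoots m 1)
  have hne : (Polynomial.nthRootsFinset m (1 : ℂ)).Nonempty :=
    ⟨1, by rw [Polynomial.mem_nthRootsFinset hm0]; simp⟩
  have hm0' : (0 : ℝ) < m := by exact_mod_cast hm0
  obtain ⟨a, ha, h⟩ := Finset.exists_le_card_fiber_of_nsmul_le_card_of_maps_to
    (M := ℝ) (b := (X.card : ℝ) / m) hroot hne (by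
      rw [nsmul_eq_mul]
      calc ((Polynomial.nthRootsFinset m (1 : ℂ)).card : ℝ) * ((X.card : ℝ) / m)
          ≤ m * ((X.card : ℝ) / m) := by gcongr
        _ = X.card := by field_simp)
  refine ⟨a, ?_, h⟩
  rintro rfl
  rw [Polynomial.mem_nthRootsFinset hm0, zero_pow hm0.ne'] at ha
  exact zero_ne_one ha

/-- `Kills X S`: coefficients can be attached to `S` so every character in `X` is killed. -/
def Kills {G : Type*} [CommGroup G] (X : Finset (AddChar (Additive G) ℂ)) (S : Multiset G) : Prop :=
  ∃ P : Multiset (ℂ × G), P.map Prod.snd = S ∧ (∀ p ∈ P, p.1 ≠ 0) ∧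
    ∀ χ ∈ X, ∃ p ∈ P, χ (Additive.ofMul p.2) = p.1

theorem Kills.cons {G : Type*} [CommGroup G] {X : Finset (AddChar (Additive G) ℂ)}
    {S : Multiset G} {g : G} {a : ℂ} (ha : a ≠ 0)
    (h : Kills (X.filter (fun χ => ¬ χ (Additive.ofMul g) = a)) S) : Kills X (g ::ₘ S) := by
  obtain ⟨P, h1, h2, h3⟩ := h
  refine ⟨(a, g) ::ₘ P, by simp [h1], ?_, ?_⟩
  · intro p hp
    rcases Multiset.mem_cons.1 hp with rfl | hp
    · exact ha
    · exact h2 p hp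
  · intro χ hχ
    by_cases hc : χ (Additive.ofMul g) = a
    · exact ⟨(a, g), by simp, hc⟩
    · obtain ⟨p, hp, hp'⟩ := h3 χ (by simp [hχ, hc])
      exact ⟨p, Multiset.mem_cons_of_mem hp, hp'⟩

theorem kills_of_card_le {G : Type*} [CommGroup G] [Fintype G] (m : ℕ)
    (hm : m = Monoid.exponent G) (hm0 : 0 < m) (S : Multiset G) :
    ∀ X : Finset (AddChar (Additive G) ℂ), X.card ≤ S.card → Kills X S := by
  induction S using Multiset.induction with
  | empty =>
    intro X hX
    have : X = ∅ := by simpa using hX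
    subst this
    exact ⟨0, by simp, by simp, by simp⟩
  | cons g S ih =>
    intro X hX
    obtain ⟨a, ha, h⟩ := greedy_step m hm hm0 X g
    refine Kills.cons ha (ih _ ?_)
    have hsum := Finset.card_filter_add_card_filter_not (s := X) (fun χ => χ (Additive.ofMul g) = a)
    rw [Multiset.card_cons] at hX
    rcases Nat.eq_zero_or_pos X.card with h0 | h0
    · omega
    · have : (0 : ℝ) < X.card / m := by positivity
      have h' := this.trans_le h
      have : 0 < (X.filter (fun χ => χ (Additive.ofMul g) = a)).card := by exact_mod_cast h'
      omega

theorem kills_of_bound {G : Type*} [CommGroup G] [Fintype G] (m : ℕ)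
    (hm : m = Monoid.exponent G) (hm0 : 0 < m) (k : ℕ) :
    ∀ (S : Multiset G) (X : Finset (AddChar (Additive G) ℂ)), k + m ≤ S.card →
      (X.card : ℝ) * (1 - 1 / m) ^ k < m + 1 → Kills X S := by
  induction k with
  | zero =>
    intro S X hS hX
    apply kills_of_card_le m hm hm0
    have : X.card < m + 1 := by
      have : (X.card : ℝ) < m + 1 := by simpa using hX
      exact_mod_cast this
    omega
  | succ k ih =>
    intro S X hS hX
    obtain ⟨g, hg⟩ : ∃ g, g ∈ S := Multiset.card_pos_iff_exists_mem.1 (by omega)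
    obtain ⟨S, rfl⟩ := Multiset.exists_cons_of_mem hg
    rw [Multiset.card_cons] at hS
    obtain ⟨a, ha, h⟩ := greedy_step m hm hm0 X g
    refine Kills.cons ha (ih _ _ (by omega) (lt_of_le_of_lt ?_ hX))
    have hsum := Finset.card_filter_add_card_filter_not (s := X) (fun χ => χ (Additive.ofMul g) = a)
    have hsum' : ((X.filter (fun χ => χ (Additive.ofMul g) = a)).card : ℝ) +
      (X.filter (fun χ => ¬ χ (Additive.ofMul g) = a)).card = X.card := by exact_mod_cast hsum
    have h1 : (0 : ℝ) ≤ 1 - 1 / m := by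
      have : (1 : ℝ) ≤ m := by exact_mod_cast hm0
      rw [sub_nonneg, div_le_one (by positivity)]
      exact this
    rw [pow_succ', ← mul_assoc]
    refine mul_le_mul_of_nonneg_right ?_ (pow_nonneg h1 k)
    rw [mul_sub, mul_one, mul_one_div]
    linarith

theorem sum_zero_of {G : Type*} [CommGroup G] [Fintype G] (P : Multiset (ℂ × G)) :
    ∀ h : G, (∀ T ≤ P.map Prod.snd, h * T.prod ≠ 1) →
      ∑ χ : AddChar (Additive G) ℂ, χ (Additive.ofMul h) *
        (P.map (fun p => p.1 - χ (Additive.ofMul p.2))).prod = 0 := by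
  classical
  induction P using Multiset.induction with
  | empty =>
    intro h hT
    have : h ≠ 1 := by simpa using hT 0 (by simp)
    simp [AddChar.sum_apply_eq_ite, this]
  | cons p P ih =>
    intro h hT
    have e1 := ih h (fun T hle => hT T (by
      rw [Multiset.map_cons]; exact hle.trans (Multiset.le_cons_self _ _)))
    have e2 := ih (h * p.2) (fun T hle => by
      have := hT (p.2 ::ₘ T) (by rw [Multiset.map_cons]; exact Multiset.cons_le_cons _ hle)
      rwa [Multiset.prod_cons, ← mul_assoc] at this)
    have : ∀ χ : AddChar (Additive G) ℂ, χ (Additive.ofMul h) *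
        ((p ::ₘ P).map (fun p => p.1 - χ (Additive.ofMul p.2))).prod
        = p.1 * (χ (Additive.ofMul h) * (P.map (fun p => p.1 - χ (Additive.ofMul p.2))).prod)
          - χ (Additive.ofMul (h * p.2)) *
            (P.map (fun p => p.1 - χ (Additive.ofMul p.2))).prod := by
      intro χ
      rw [Multiset.map_cons, Multiset.prod_cons, ofMul_mul, AddChar.map_add_eq_mul]
      ring
    rw [Finset.sum_congr rfl (fun χ _ => this χ), Finset.sum_sub_distrib, ← Finset.mul_sum, e1, e2]
    simp

theorem sum_ne_zero_of {G : Type*} [CommGroup G] [Fintype G] (P : Multiset (ℂ × G)) :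
    (∀ T ≤ P.map Prod.snd, T ≠ 0 → T.prod ≠ 1) → (∀ p ∈ P, p.1 ≠ 0) →
      ∑ χ : AddChar (Additive G) ℂ,
        (P.map (fun p => p.1 - χ (Additive.ofMul p.2))).prod ≠ 0 := by
  classical
  induction P using Multiset.induction with
  | empty => intro _ _; simp
  | cons p P ih =>
    intro hT hp
    have e1 := ih (fun T hle => hT T (by
      rw [Multiset.map_cons]; exact hle.trans (Multiset.le_cons_self _ _)))
      (fun q hq => hp q (Multiset.mem_cons_of_mem hq))
    have e2 := sum_zero_of P p.2 (fun T hle => by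
      have := hT (p.2 ::ₘ T) (by rw [Multiset.map_cons]; exact Multiset.cons_le_cons _ hle)
        (Multiset.cons_ne_zero)
      rwa [Multiset.prod_cons] at this)
    simp only [Multiset.map_cons, Multiset.prod_cons, sub_mul]
    rw [Finset.sum_sub_distrib, ← Finset.mul_sum, e2, sub_zero]
    exact mul_ne_zero (hp p (Multiset.mem_cons_self _ _)) e1

/-- Theorem of van Emde Boas–Kruyswijk and Meshulam: if `G` is a finite abelian group and
`m` is the maximal order of an element of `G` (i.e. the exponent of `G`), then every
multiset of elements of `G` of cardinality at least `m * (1 + log (|G| / m))` has a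
nonempty submultiset whose product is the identity.  Equivalently,
`n(G) < m * (1 + log (|G| / m))`. -/
theorem davenport_bound (G : Type*) [CommGroup G] [Fintype G] (m : ℕ)
    (hm : m = Monoid.exponent G) (S : Multiset G)
    (hS : (m : ℝ) * (1 + Real.log ((Fintype.card G : ℝ) / (m : ℝ))) ≤ (S.card : ℝ)) :
    ∃ T : Multiset G, T ≤ S ∧ T ≠ 0 ∧ T.prod = 1 := by
  have hm0 : 0 < m := by
    rw [hm]; exact Nat.pos_of_ne_zero Monoid.exponent_ne_zero_of_finite
  have hmR : (0 : ℝ) < m := by exact_mod_cast hm0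
  have hm1 : (1 : ℝ) ≤ m := by exact_mod_cast hm0
  have hle : (m : ℝ) ≤ Fintype.card G := by
    have : m ≤ Fintype.card G := by
      rw [hm]; exact Nat.le_of_dvd Fintype.card_pos Group.exponent_dvd_card
    exact_mod_cast this
  have hG : (0 : ℝ) < Fintype.card G := hmR.trans_le hle
  set l := Real.log ((Fintype.card G : ℝ) / (m : ℝ)) with hl
  have hl0 : 0 ≤ l := Real.log_nonneg (by rwa [one_le_div hmR])
  have hk1 := Nat.le_ceil ((m : ℝ) * l)
  have hk2 := Nat.ceil_lt_add_one (mul_nonneg hmR.le hl0)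
  set k := ⌈(m : ℝ) * l⌉₊
  have hkS : k + m ≤ S.card := by
    have : (k : ℝ) + m < S.card + 1 := by linarith
    have : k + m < S.card + 1 := by exact_mod_cast this
    omega
  have hb : ((Finset.univ : Finset (AddChar (Additive G) ℂ)).card : ℝ) * (1 - 1 / m) ^ k
      < m + 1 := by
    have hc : (Finset.univ : Finset (AddChar (Additive G) ℂ)).card = Fintype.card G := by
      rw [Finset.card_univ, AddChar.card_eq]; exact Fintype.card_congr Additive.toMul
    rw [hc]
    have h0 : (0 : ℝ) ≤ 1 - 1 / m := by
      rw [sub_nonneg, div_le_one hmR]; exact hm1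
    have h1 : (1 - 1 / (m : ℝ)) ^ k ≤ Real.exp (-l) := by
      calc (1 - 1 / (m : ℝ)) ^ k ≤ (Real.exp (-(1 / (m : ℝ)))) ^ k :=
            pow_le_pow_left₀ h0 (Real.one_sub_le_exp_neg _) k
        _ = Real.exp (k * -(1 / (m : ℝ))) := by rw [Real.exp_nat_mul]
        _ ≤ Real.exp (-l) := by
            apply Real.exp_le_exp.2
            have : l ≤ k / m := by rw [le_div_iff₀ hmR]; linarith
            have e : (k : ℝ) * -(1 / (m : ℝ)) = -(k / m) := by ring
            linarith
    have h2 : Real.exp (-l) = m / Fintype.card G := by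
      rw [Real.exp_neg, hl, Real.exp_log (by positivity), inv_div]
    have h3 : (Fintype.card G : ℝ) * (1 - 1 / (m : ℝ)) ^ k ≤ m := by
      calc _ ≤ (Fintype.card G : ℝ) * (m / Fintype.card G) := by
            rw [← h2]; exact mul_le_mul_of_nonneg_left h1 hG.le
        _ = m := by field_simp
    linarith
  obtain ⟨P, hP, hP0, hPX⟩ := kills_of_bound m hm hm0 k S Finset.univ hkS hb
  by_contra hcon
  push Not at hcon
  refine sum_ne_zero_of P (by rw [hP]; exact hcon) hP0 (Finset.sum_eq_zero fun χ _ => ?_)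
  obtain ⟨p, hp, hp'⟩ := hPX χ (Finset.mem_univ _)
  exact Multiset.prod_eq_zero (Multiset.mem_map.2 ⟨p, hp, by rw [hp', sub_self]⟩)
end

section
/- Let f ∈ ℤ[X] be a monic polynomial whose splitting field K has degree n over ℚ, and let η ∈ (0, 1). Let x be a real number and suppose there exists an integer q₀ > log x such that for every real y with x^{1/2} < y ≤ x, every positive integer q ≤ x^η with q₀ ∤ q, and every integer a with gcd(a, q) = 1, the number of primes p < y with p ≡ a (mod q) such that f splits into linear factors modulo p is at least π(y)/(2·n·φ(q)). Then, provided x is sufficiently large in terms of K and η, the following holds: for every squarefree positive integer L none of whose prime factors exceeds x^{(1−η)/2} and which satisfies ∑_{q prime, q ∣ L} 1/q ≤ (1−η)/(32n), there exists a positive integer k ≤ x^{1−η} with gcd(k, L) = 1 such that #{d : d ∣ L, dk+1 ≤ x, dk+1 is prime, and f splits into linear factors modulo dk+1} ≥ #{d : d ∣ L, 1 ≤ d ≤ x^η} / (8·n·log x). -/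
/-- The image of `f` in `(ZMod p)[X]` is a product of linear factors. -/
def SplitsModLinear (f : Polynomial ℤ) (p : ℕ) : Prop :=
  ∃ s : Multiset (ZMod p),
    f.map (Int.castRingHom (ZMod p)) =
      (s.map fun a => Polynomial.X - Polynomial.C a).prod

/-- `primePi y` is the number of primes `p ≤ y`. -/
noncomputable def primePi (y : ℝ) : ℕ := {p : ℕ | p.Prime ∧ (p : ℝ) ≤ y}.ncard


namespace PV

/-- real valued Moebius function -/
noncomputable def mu (n : ℕ) : ℝ := ((ArithmeticFunction.moebius n : ℤ) : ℝ)

lemma sum_mu (t : ℕ) : ∑ s ∈ t.divisors, mu s = if t = 1 then 1 else 0 := by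
  have h := congrArg (fun F : ArithmeticFunction ℤ => F t) ArithmeticFunction.coe_zeta_mul_moebius
  simp only [ArithmeticFunction.coe_zeta_mul_apply, ArithmeticFunction.one_apply] at h
  unfold mu
  rw [← Int.cast_sum, h]
  split_ifs <;> simp

lemma sum_mu_div (l e : ℕ) (hl : l ≠ 0) :
    ∑ d ∈ l.divisors, (if e ∣ d then mu (l / d) else 0) = if e = l then 1 else 0 := by
  by_cases he : e ∣ l
  · obtain ⟨t, rfl⟩ := he
    have he0 : e ≠ 0 := by rintro rfl; simp at hl
    have ht0 : t ≠ 0 := by rintro rfl; simp at hl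
    rw [← Finset.sum_filter]
    have : ∑ d ∈ (e * t).divisors with e ∣ d, mu (e * t / d) = ∑ s ∈ t.divisors, mu (t / s) := by
      symm
      apply Finset.sum_bij (fun s _ => e * s)
      · intro s hs
        have := Nat.dvd_of_mem_divisors hs
        simp [hl, Nat.mul_dvd_mul_left e this]
      · intro a _ b _ h
        exact Nat.eq_of_mul_eq_mul_left (Nat.pos_of_ne_zero he0) h
      · intro d hd
        simp only [Finset.mem_filter, Nat.mem_divisors] at hd
        obtain ⟨⟨h1, _⟩, ⟨s, rfl⟩⟩ := hd
        exact ⟨s, by simp [ht0, Nat.dvd_of_mul_dvd_mul_left (Nat.pos_of_ne_zero he0) h1], rfl⟩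
      · intro s _
        rw [Nat.mul_div_mul_left _ _ (Nat.pos_of_ne_zero he0)]
    rw [this, Nat.sum_div_divisors t mu, sum_mu t]
    by_cases h1 : t = 1
    · simp [h1]
    · rw [if_neg h1, if_neg]
      intro h
      apply h1
      have : e * 1 = e * t := by omega
      exact (Nat.eq_of_mul_eq_mul_left (Nat.pos_of_ne_zero he0) this).symm
  · rw [if_neg (by rintro rfl; exact he dvd_rfl)]
    apply Finset.sum_eq_zero
    intro d hd
    rw [if_neg]
    intro h
    exact he (h.trans (Nat.dvd_of_mem_divisors hd))

lemma orth (l l' : ℕ) (hl : l ≠ 0) (hl' : l' ≠ 0) :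
    ∑ d ∈ l.divisors, ∑ d' ∈ l'.divisors,
      (d : ℝ) * d' * mu (l / d) * mu (l' / d') / (Nat.lcm d d' : ℝ)
      = if l = l' then (l.totient : ℝ) else 0 := by
  have key : ∀ d ∈ l.divisors, ∀ d' ∈ l'.divisors,
      (d : ℝ) * d' * mu (l / d) * mu (l' / d') / (Nat.lcm d d' : ℝ) =
      ∑ e ∈ l.divisors, (e.totient : ℝ) * ((if e ∣ d then mu (l / d) else 0) *
        (if e ∣ d' then mu (l' / d') else 0)) := by
    intro d hd d' hd'
    have hd0 : d ≠ 0 := (Nat.pos_of_mem_divisors hd).ne'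
    have hd0' : d' ≠ 0 := (Nat.pos_of_mem_divisors hd').ne'
    have hlcm : (Nat.lcm d d' : ℝ) ≠ 0 := by exact_mod_cast Nat.lcm_ne_zero hd0 hd0'
    have h1 : (d : ℝ) * d' = (Nat.gcd d d' : ℝ) * (Nat.lcm d d' : ℝ) := by
      exact_mod_cast (Nat.gcd_mul_lcm d d').symm
    have h2 : (Nat.gcd d d' : ℝ) = ∑ e ∈ l.divisors, if e ∣ d ∧ e ∣ d' then (e.totient : ℝ) else 0 := by
      rw [← Finset.sum_filter]
      have : l.divisors.filter (fun e => e ∣ d ∧ e ∣ d') = (Nat.gcd d d').divisors := by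
        ext e
        simp only [Finset.mem_filter, Nat.mem_divisors, Nat.dvd_gcd_iff]
        constructor
        · rintro ⟨_, h⟩; exact ⟨h, (Nat.gcd_pos_of_pos_left _ (Nat.pos_of_ne_zero hd0)).ne'⟩
        · rintro ⟨h, _⟩; exact ⟨⟨h.1.trans (Nat.dvd_of_mem_divisors hd), hl⟩, h⟩
      rw [this]
      conv_lhs => rw [← Nat.sum_totient (Nat.gcd d d')]
      push_cast; rfl
    rw [h1]
    have : (Nat.gcd d d' : ℝ) * (Nat.lcm d d' : ℝ) * mu (l / d) * mu (l' / d') / (Nat.lcm d d' : ℝ)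
      = (Nat.gcd d d' : ℝ) * (mu (l / d) * mu (l' / d')) := by field_simp
    rw [this, h2, Finset.sum_mul]
    apply Finset.sum_congr rfl
    intro e _
    by_cases ha : e ∣ d <;> by_cases hb : e ∣ d' <;> simp [ha, hb]
  rw [Finset.sum_congr rfl fun d hd => Finset.sum_congr rfl (key d hd)]
  have : ∑ d ∈ l.divisors, ∑ d' ∈ l'.divisors, ∑ e ∈ l.divisors, (e.totient : ℝ) *
        ((if e ∣ d then mu (l / d) else 0) * (if e ∣ d' then mu (l' / d') else 0)) =
      ∑ e ∈ l.divisors, (e.totient : ℝ) * ((∑ d ∈ l.divisors, (if e ∣ d then mu (l / d) else 0)) *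
        (∑ d' ∈ l'.divisors, if e ∣ d' then mu (l' / d') else 0)) := by
    rw [Finset.sum_congr rfl fun d _ => Finset.sum_comm, Finset.sum_comm]
    apply Finset.sum_congr rfl
    intro e _
    rw [Finset.sum_mul_sum, Finset.mul_sum]
    apply Finset.sum_congr rfl
    intro d _
    rw [Finset.mul_sum]
  rw [this]
  simp_rw [sum_mu_div l _ hl, sum_mu_div l' _ hl']
  by_cases h : l = l'
  · subst h
    simp [hl]
  · rw [if_neg h]
    apply Finset.sum_eq_zero
    intro e _
    by_cases h1 : e = l
    · subst h1; simp [h]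
    · simp [h1]

lemma count_ap (m e N : ℕ) (he : 0 < e) (hc : Nat.Coprime e m) :
    |(((Finset.Ioc 0 N).filter (fun j => e ∣ m * j + 1)).card : ℝ) - (N : ℝ) / e| ≤ 1 := by
  obtain ⟨r, hr⟩ : ∃ r : ℕ, e ∣ m * r + 1 := by
    have : NeZero e := ⟨he.ne'⟩
    have hun : IsUnit (m : ZMod e) := (ZMod.isUnit_iff_coprime m e).2 hc.symm
    obtain ⟨u, hu⟩ := hun
    refine ⟨((-(↑u⁻¹ : ZMod e)) : ZMod e).val, ?_⟩
    rw [← ZMod.natCast_eq_zero_iff]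
    push_cast
    rw [ZMod.natCast_zmod_val, ← hu]
    simp
  have hset : (Finset.Ioc 0 N).filter (fun j => e ∣ m * j + 1) =
      (Finset.Ioc 0 N).filter (fun j => j ≡ r [MOD e]) := by
    apply Finset.filter_congr
    intro j _
    constructor
    · intro hj
      have h1 : m * j + 1 ≡ m * r + 1 [MOD e] :=
        ((Nat.modEq_zero_iff_dvd).2 hj).trans ((Nat.modEq_zero_iff_dvd).2 hr).symm
      exact Nat.ModEq.cancel_left_of_coprime hc (Nat.ModEq.add_right_cancel' 1 h1)
    · intro hj
      have h1 : m * j + 1 ≡ m * r + 1 [MOD e] := (hj.mul_left m).add_right 1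
      exact (Nat.modEq_zero_iff_dvd).1 (h1.trans ((Nat.modEq_zero_iff_dvd).2 hr))
  rw [hset]
  have h := Nat.Ioc_filter_modEq_card 0 N he r
  have heR : (0 : ℚ) < e := by exact_mod_cast he
  have hmono : ⌊(((0 : ℕ) : ℚ) - r) / e⌋ ≤ ⌊((N : ℚ) - r) / e⌋ := by
    apply Int.floor_le_floor
    gcongr
    simp
  rw [max_eq_left (by omega)] at h
  have h1 := Int.floor_le (((N : ℚ) - r) / e)
  have h2 := Int.lt_floor_add_one (((N : ℚ) - r) / e)
  have h3 := Int.floor_le ((((0 : ℕ) : ℚ) - r) / e)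
  have h4 := Int.lt_floor_add_one ((((0 : ℕ) : ℚ) - r) / e)
  have hQ : ((((Finset.Ioc 0 N).filter (fun j => j ≡ r [MOD e])).card : ℤ) : ℚ) =
     (⌊((N : ℚ) - r) / e⌋ : ℚ) - (⌊(((0 : ℕ) : ℚ) - r) / e⌋ : ℚ) := by rw [h]; push_cast; ring
  have h5 : ((N : ℚ) - r) / e - (((0 : ℕ) : ℚ) - r) / e = (N : ℚ) / e := by push_cast; ring
  have : |((((Finset.Ioc 0 N).filter (fun j => j ≡ r [MOD e])).card : ℤ) : ℚ) - (N : ℚ) / e| ≤ 1 := by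
    rw [hQ, ← h5, abs_le]
    constructor <;> linarith
  have h6 := (Rat.cast_le (K := ℝ)).2 this
  push_cast at h6
  exact h6

end PV

namespace PV

/-- squarefree numbers up to `z` coprime to `m` -/
def Q (m z : ℕ) : Finset ℕ := (Finset.Icc 1 z).filter (fun l => Squarefree l ∧ l.Coprime m)

/-- `n ↦ 1/n` -/
noncomputable def invHom : ℕ →* ℝ where
  toFun n := (n : ℝ)⁻¹
  map_one' := by simp
  map_mul' a b := by push_cast; rw [mul_inv]

lemma totient_prod (n : ℕ) (hn : n ≠ 0) :
    ∏ p ∈ n.primeFactors, (1 - ((p : ℝ))⁻¹)⁻¹ = (n : ℝ) / (n.totient : ℝ) := by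
  have h := Nat.totient_eq_mul_prod_factors n
  have h' : (n.totient : ℝ) = n * ∏ p ∈ n.primeFactors, (1 - (p : ℝ)⁻¹) := by
    have := congrArg (fun q : ℚ => (q : ℝ)) h
    push_cast at this
    exact this
  have hn' : (n : ℝ) ≠ 0 := by exact_mod_cast hn
  rw [h', Finset.prod_inv_distrib, div_mul_eq_div_div, div_self hn', one_div]

lemma fiber_bound (T : Finset ℕ) (l m : ℕ) (hl : l ≠ 0) (hm : m ≠ 0) (hlm : l.Coprime m)
    (hT : ∀ n ∈ T, n ≠ 0 ∧ l ∣ n ∧ ∀ p, p.Prime → p ∣ n → p ∣ l * m) :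
    ∑ n ∈ T, (n : ℝ)⁻¹ ≤ (m : ℝ) / m.totient * (1 / (l.totient : ℝ)) := by
  have hlR : (0 : ℝ) < l := by exact_mod_cast Nat.pos_of_ne_zero hl
  have hs := (EulerProduct.summable_and_hasSum_factoredNumbers_prod_filter_prime_geometric
    (f := invHom) (by
      intro p hp
      simp only [invHom, MonoidHom.coe_mk, OneHom.coe_mk, norm_inv, RCLike.norm_natCast]
      exact inv_lt_one_of_one_lt₀ (by exact_mod_cast hp.one_lt)) (l * m).primeFactors).2
  have hfil : (l * m).primeFactors.filter Nat.Prime = (l * m).primeFactors :=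
    Finset.filter_true_of_mem fun p hp => Nat.prime_of_mem_primeFactors hp
  rw [hfil] at hs
  have hprod : ∏ p ∈ (l * m).primeFactors, (1 - invHom p)⁻¹ = (l * m : ℝ) / (l.totient * m.totient) := by
    have := totient_prod (l * m) (mul_ne_zero hl hm)
    rw [Nat.totient_mul hlm] at this
    push_cast at this
    exact this
  rw [hprod] at hs
  have hs2 : HasSum (Set.indicator (Nat.factoredNumbers (l * m).primeFactors) (fun n => invHom n))
      ((l * m : ℝ) / (l.totient * m.totient)) := by
    rw [← hasSum_subtype_iff_indicator]
    exact hs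
  have hle := sum_le_hasSum (T.image (fun n => n / l)) (by
    intro i _
    apply Set.indicator_nonneg
    intro x _
    simp [invHom]) hs2
  rw [Finset.sum_image] at hle
  · have heq : ∑ n ∈ T, (n : ℝ)⁻¹ = (l : ℝ)⁻¹ * ∑ x ∈ T, Set.indicator
        (Nat.factoredNumbers (l * m).primeFactors) (fun n => invHom n) (x / l) := by
      rw [Finset.mul_sum]
      apply Finset.sum_congr rfl
      intro n hn
      obtain ⟨h0, ⟨t, rfl⟩, hp⟩ := hT n hn
      rw [Nat.mul_div_cancel_left _ (Nat.pos_of_ne_zero hl), Set.indicator_of_mem]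
      · simp [invHom, mul_comm]
      · rw [Nat.mem_factoredNumbers]
        refine ⟨right_ne_zero_of_mul h0, fun p hpt => ?_⟩
        have hpp := Nat.prime_of_mem_primeFactorsList hpt
        have := Nat.dvd_of_mem_primeFactorsList hpt
        rw [Nat.mem_primeFactors]
        exact ⟨hpp, hp p hpp (this.mul_left l), mul_ne_zero hl hm⟩
    rw [heq]
    calc _ ≤ (l : ℝ)⁻¹ * ((l * m : ℝ) / (l.totient * m.totient)) := by gcongr
      _ = _ := by
        have h1 : (l.totient : ℝ) ≠ 0 := by
          exact_mod_cast (Nat.totient_pos.2 (Nat.pos_of_ne_zero hl)).ne'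
        have h2 : (m.totient : ℝ) ≠ 0 := by
          exact_mod_cast (Nat.totient_pos.2 (Nat.pos_of_ne_zero hm)).ne'
        field_simp
  · intro a ha b hb hab
    obtain ⟨_, ⟨t, rfl⟩, _⟩ := hT a ha
    obtain ⟨_, ⟨s, rfl⟩, _⟩ := hT b hb
    simp only [Nat.mul_div_cancel_left _ (Nat.pos_of_ne_zero hl)] at hab
    rw [hab]

lemma S_ge (m z : ℕ) (hm : m ≠ 0) :
    Real.log ((z : ℝ) + 1) ≤ (m : ℝ) / m.totient * ∑ l ∈ Q m z, 1 / (l.totient : ℝ) := by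
  have h1 := log_add_one_le_harmonic z
  have h2 : ((harmonic z : ℚ) : ℝ) = ∑ n ∈ Finset.Icc 1 z, (n : ℝ)⁻¹ := by
    rw [harmonic_eq_sum_Icc]; push_cast; rfl
  rw [h2] at h1
  push_cast at h1
  refine h1.trans ?_
  set g : ℕ → ℕ := fun n => ∏ p ∈ n.primeFactors.filter (fun p => ¬ p ∣ m), p with hg
  have hgdvd : ∀ n, g n ∣ n := fun n =>
    (Finset.prod_dvd_prod_of_subset _ _ _ (Finset.filter_subset _ _)).trans
      (Nat.prod_primeFactors_dvd n)
  have hmaps : ∀ n ∈ Finset.Icc 1 z, g n ∈ Q m z := by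
    intro n hn
    rw [Finset.mem_Icc] at hn
    simp only [Q, Finset.mem_filter, Finset.mem_Icc]
    refine ⟨⟨Nat.pos_of_dvd_of_pos (hgdvd n) (by omega),
      (Nat.le_of_dvd (by omega) (hgdvd n)).trans hn.2⟩, ?_, ?_⟩
    · have : Squarefree (∏ p ∈ n.primeFactors, p) := by
        rw [← Nat.radical_eq_prod_primeFactors]
        exact UniqueFactorizationMonoid.squarefree_radical
      exact this.squarefree_of_dvd (Finset.prod_dvd_prod_of_subset _ _ _ (Finset.filter_subset _ _))
    · apply Nat.Coprime.prod_left
      intro p hp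
      simp only [Finset.mem_filter] at hp
      exact (Nat.Prime.coprime_iff_not_dvd (Nat.prime_of_mem_primeFactors hp.1)).2 hp.2
  rw [← Finset.sum_fiberwise_of_maps_to hmaps, Finset.mul_sum]
  apply Finset.sum_le_sum
  intro l hl
  simp only [Q, Finset.mem_filter, Finset.mem_Icc] at hl
  apply fiber_bound _ l m (by omega) hm hl.2.2
  intro n hn
  simp only [Finset.mem_filter, Finset.mem_Icc] at hn
  obtain ⟨⟨hn1, hn2⟩, hgn⟩ := hn
  refine ⟨by omega, hgn ▸ hgdvd n, fun p hp hpn => ?_⟩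
  by_cases hpm : p ∣ m
  · exact hpm.mul_left l
  · apply Dvd.dvd.mul_right
    rw [← hgn]
    apply Finset.dvd_prod_of_mem (fun p => p)
    simp [hp, hpn, hpm]
    omega

lemma sigma_bound (l : ℕ) (hl : Squarefree l) :
    (∑ d ∈ l.divisors, (d : ℝ)) / (l.totient : ℝ) ≤ 6 * Real.sqrt l := by
  have hl0 : l ≠ 0 := hl.ne_zero
  have hphi : (0 : ℝ) < l.totient := by exact_mod_cast Nat.totient_pos.2 (Nat.pos_of_ne_zero hl0)
  rw [div_le_iff₀ hphi]
  have h1 : ∑ d ∈ l.divisors, (d : ℝ) = ∏ p ∈ l.primeFactors, (1 + (p : ℝ)) := by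
    have := ArithmeticFunction.IsMultiplicative.prodPrimeFactors_one_add_of_squarefree
      (f := ArithmeticFunction.id) ArithmeticFunction.isMultiplicative_id hl
    simp only [ArithmeticFunction.id_apply] at this
    have h := congrArg (Nat.cast : ℕ → ℝ) this.symm
    push_cast at h
    exact h
  have hls : (l : ℝ) = ∏ p ∈ l.primeFactors, (p : ℝ) := by
    have := Nat.prod_primeFactors_of_squarefree hl
    have h := congrArg (Nat.cast : ℕ → ℝ) this.symm
    push_cast at h
    exact h
  have h2 : (l.totient : ℝ) = ∏ p ∈ l.primeFactors, ((p : ℝ) - 1) := by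
    have h := totient_prod l hl0
    have h3 : ∏ p ∈ l.primeFactors, ((p : ℝ) - 1) =
        (∏ p ∈ l.primeFactors, (p : ℝ)) * (∏ p ∈ l.primeFactors, (1 - (p : ℝ)⁻¹)) := by
      rw [← Finset.prod_mul_distrib]
      apply Finset.prod_congr rfl
      intro p hp
      have : (p : ℝ) ≠ 0 := by exact_mod_cast (Nat.prime_of_mem_primeFactors hp).ne_zero
      field_simp
    rw [h3, ← hls]
    rw [Finset.prod_inv_distrib] at h
    have hlR : (l : ℝ) ≠ 0 := by exact_mod_cast hl0
    have h4 : (∏ p ∈ l.primeFactors, (1 - (p : ℝ)⁻¹)) = (l.totient : ℝ) / l := by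
      rw [← inv_div, ← h, inv_inv]
    rw [h4]; field_simp
  have h3 : Real.sqrt l = ∏ p ∈ l.primeFactors, Real.sqrt p := by
    conv_lhs => rw [hls]
    rw [Real.sqrt_eq_rpow, ← Real.finsetProd_rpow _ _ (fun i _ => by positivity)]
    simp_rw [Real.sqrt_eq_rpow]
  set c : ℕ → ℕ := fun p => if p = 2 then 3 else if p = 3 then 2 else 1 with hc
  have hc1 : ∏ p ∈ l.primeFactors, c p ≤ 6 := by
    calc ∏ p ∈ l.primeFactors, c p ≤ ∏ p ∈ l.primeFactors ∪ {2, 3}, c p := by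
          apply Finset.prod_le_prod_of_subset_of_one_le' Finset.subset_union_left
          intro i _ _
          simp only [hc]
          split_ifs <;> norm_num
      _ = ∏ p ∈ {2, 3}, c p := by
          symm
          apply Finset.prod_subset Finset.subset_union_right
          intro x _ hx
          simp only [Finset.mem_insert, Finset.mem_singleton, not_or] at hx
          simp [hc, hx.1, hx.2]
      _ = 6 := by simp [hc]
  have hc2 : ∏ p ∈ l.primeFactors, (c p : ℝ) ≤ 6 := by exact_mod_cast hc1
  rw [h1]
  calc ∏ p ∈ l.primeFactors, (1 + (p : ℝ))
      ≤ ∏ p ∈ l.primeFactors, ((c p : ℝ) * (Real.sqrt p * ((p : ℝ) - 1))) := by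
        apply Finset.prod_le_prod
        · intro i _; positivity
        · intro p hp
          have hpp := Nat.prime_of_mem_primeFactors hp
          by_cases hp2 : p = 2
          · subst hp2
            have : (1 : ℝ) ≤ Real.sqrt 2 := Real.one_le_sqrt.2 (by norm_num)
            simp [hc]; linarith
          by_cases hp3 : p = 3
          · subst hp3
            have : (1 : ℝ) ≤ Real.sqrt 3 := Real.one_le_sqrt.2 (by norm_num)
            simp [hc]; linarith
          have hp4 : (4 : ℝ) ≤ p := by
            have := hpp.two_le
            have : 4 ≤ p := by omega
            exact_mod_cast this
          have : (2 : ℝ) ≤ Real.sqrt p := by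
            apply Real.le_sqrt_of_sq_le; linarith
          simp only [hc, hp2, hp3, if_false, Nat.cast_one, one_mul]
          nlinarith
    _ = (∏ p ∈ l.primeFactors, (c p : ℝ)) * (Real.sqrt l * l.totient) := by
        rw [Finset.prod_mul_distrib, Finset.prod_mul_distrib, h3, h2]
    _ ≤ 6 * (Real.sqrt l * l.totient) := by gcongr
    _ = _ := by ring

end PV

namespace PV

lemma sq_sum {ι : Type*} (I : Finset ι) (a : ι → ℝ) (d : ι → ℕ) (m N : ℕ)
    (hd : ∀ i ∈ I, 0 < d i ∧ (d i).Coprime m) :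
    ∑ j ∈ Finset.Ioc 0 N, (∑ i ∈ I, if d i ∣ m * j + 1 then a i else 0) ^ 2 ≤
      N * (∑ i ∈ I, ∑ i' ∈ I, a i * a i' / (Nat.lcm (d i) (d i') : ℝ)) + (∑ i ∈ I, |a i|) ^ 2 := by
  set A : ℕ → ℝ := fun e => (((Finset.Ioc 0 N).filter (fun j => e ∣ m * j + 1)).card : ℝ) with hA
  have h1 : ∑ j ∈ Finset.Ioc 0 N, (∑ i ∈ I, if d i ∣ m * j + 1 then a i else 0) ^ 2 =
      ∑ i ∈ I, ∑ i' ∈ I, a i * a i' * A (Nat.lcm (d i) (d i')) := by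
    simp_rw [sq, Finset.sum_mul_sum]
    rw [Finset.sum_comm]
    apply Finset.sum_congr rfl
    intro i _
    rw [Finset.sum_comm]
    apply Finset.sum_congr rfl
    intro i' _
    simp only [hA]
    rw [Finset.card_filter]
    push_cast
    rw [Finset.mul_sum]
    apply Finset.sum_congr rfl
    intro j _
    by_cases ha : d i ∣ m * j + 1 <;> by_cases hb : d i' ∣ m * j + 1 <;>
      simp [ha, hb, Nat.lcm_dvd_iff]
  rw [h1, Finset.mul_sum, sq, Finset.sum_mul_sum, ← Finset.sum_add_distrib]
  apply Finset.sum_le_sum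
  intro i hi
  rw [Finset.mul_sum, ← Finset.sum_add_distrib]
  apply Finset.sum_le_sum
  intro i' hi'
  have hpos : 0 < Nat.lcm (d i) (d i') := Nat.lcm_pos (hd i hi).1 (hd i' hi').1
  have hcop : (Nat.lcm (d i) (d i')).Coprime m :=
    Nat.Coprime.coprime_dvd_left (Nat.lcm_dvd_mul _ _) (Nat.Coprime.mul_left (hd i hi).2 (hd i' hi').2)
  have h2 := count_ap m _ N hpos hcop
  have h3 : a i * a i' * (A (Nat.lcm (d i) (d i')) - (N : ℝ) / (Nat.lcm (d i) (d i') : ℕ)) ≤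
      |a i| * |a i'| := by
    calc _ ≤ |a i * a i' * (A (Nat.lcm (d i) (d i')) - (N : ℝ) / (Nat.lcm (d i) (d i') : ℕ))| :=
          le_abs_self _
      _ = |a i| * |a i'| * |A (Nat.lcm (d i) (d i')) - (N : ℝ) / (Nat.lcm (d i) (d i') : ℕ)| := by
          rw [abs_mul, abs_mul]
      _ ≤ |a i| * |a i'| * 1 := by gcongr
      _ = _ := by ring
  have h4 : a i * a i' * A (Nat.lcm (d i) (d i')) =
      N * (a i * a i' / (Nat.lcm (d i) (d i') : ℝ)) +
      a i * a i' * (A (Nat.lcm (d i) (d i')) - (N : ℝ) / (Nat.lcm (d i) (d i') : ℕ)) := by ring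
  rw [h4]
  linarith

lemma mu_sq {l : ℕ} (h : Squarefree l) : mu l * mu l = 1 := by
  have := ArithmeticFunction.moebius_sq_eq_one_of_squarefree h
  unfold mu
  rw [← sq]
  exact_mod_cast this

lemma abs_mu_le (l : ℕ) : |mu l| ≤ 1 := by
  have := ArithmeticFunction.abs_moebius_le_one (n := l)
  unfold mu
  exact_mod_cast this

/-- Selberg sieve upper bound for primes `≡ 1 mod m`. -/
lemma sieve (m N z : ℕ) (hm : m ≠ 0) (hz : 1 ≤ z) :
    (((Finset.Ioc 0 N).filter (fun j => (m * j + 1).Prime)).card : ℝ) ≤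
      (m : ℝ) / m.totient * (N / Real.log ((z : ℝ) + 1)) + 37 * (z : ℝ) ^ 3 := by
  set S : ℝ := ∑ l ∈ Q m z, 1 / (l.totient : ℝ) with hS
  set I : Finset (Σ _ : ℕ, ℕ) := (Q m z).sigma (fun l => l.divisors) with hI
  set a : (Σ _ : ℕ, ℕ) → ℝ := fun i => mu i.1 / (i.1.totient : ℝ) * ((i.2 : ℝ) * mu (i.1 / i.2)) with ha
  have hQ : ∀ l ∈ Q m z, 1 ≤ l ∧ l ≤ z ∧ Squarefree l ∧ l.Coprime m := by
    intro l hl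
    simp only [Q, Finset.mem_filter, Finset.mem_Icc] at hl
    tauto
  have hphi : ∀ l ∈ Q m z, (0 : ℝ) < l.totient := by
    intro l hl
    exact_mod_cast Nat.totient_pos.2 (hQ l hl).1
  have hsq := sq_sum I a (fun i => i.2) m N (by
    intro i hi
    simp only [hI, Finset.mem_sigma] at hi
    exact ⟨Nat.pos_of_mem_divisors hi.2,
      Nat.Coprime.coprime_dvd_left (Nat.dvd_of_mem_divisors hi.2) (hQ _ hi.1).2.2.2⟩)
  -- main term
  have hmain : ∑ i ∈ I, ∑ i' ∈ I, a i * a i' / (Nat.lcm i.2 i'.2 : ℝ) = S := by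
    rw [hI, Finset.sum_sigma]
    simp_rw [Finset.sum_sigma]
    rw [hS]
    apply Finset.sum_congr rfl
    intro l hl
    rw [Finset.sum_comm]
    have : ∀ l' ∈ Q m z, ∑ d ∈ l.divisors, ∑ d' ∈ l'.divisors,
        a ⟨l, d⟩ * a ⟨l', d'⟩ / (Nat.lcm d d' : ℝ) =
        mu l / l.totient * (mu l' / l'.totient) * if l = l' then (l.totient : ℝ) else 0 := by
      intro l' hl'
      rw [← orth l l' (by have := (hQ l hl).1; omega) (by have := (hQ l' hl').1; omega),
        Finset.mul_sum]
      apply Finset.sum_congr rfl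
      intro d _
      rw [Finset.mul_sum]
      apply Finset.sum_congr rfl
      intro d' _
      simp only [ha]
      ring
    rw [Finset.sum_congr rfl this]
    simp only [mul_ite, mul_zero]
    rw [Finset.sum_ite_eq, if_pos hl]
    have h1 := mu_sq (hQ l hl).2.2.1
    have h2 := (hphi l hl).ne'
    field_simp
    linarith
  -- error term
  have herr : ∑ i ∈ I, |a i| ≤ z * (6 * Real.sqrt z) := by
    rw [hI, Finset.sum_sigma]
    calc ∑ l ∈ Q m z, ∑ d ∈ l.divisors, |a ⟨l, d⟩|
        ≤ ∑ l ∈ Q m z, 6 * Real.sqrt z := by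
          apply Finset.sum_le_sum
          intro l hl
          calc ∑ d ∈ l.divisors, |a ⟨l, d⟩| ≤ ∑ d ∈ l.divisors, (d : ℝ) / l.totient := by
                apply Finset.sum_le_sum
                intro d _
                simp only [ha]
                rw [abs_mul, abs_div, abs_mul, Nat.abs_cast, Nat.abs_cast]
                have h1 := abs_mu_le l
                have h2 := abs_mu_le (l / d)
                have h3 := hphi l hl
                calc |mu l| / (l.totient : ℝ) * (d * |mu (l / d)|)
                    ≤ 1 / (l.totient : ℝ) * (d * 1) := by gcongr
                  _ = _ := by ring
            _ = (∑ d ∈ l.divisors, (d : ℝ)) / l.totient := by rw [Finset.sum_div]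
            _ ≤ 6 * Real.sqrt l := sigma_bound l (hQ l hl).2.2.1
            _ ≤ 6 * Real.sqrt z := by
                have : (l : ℝ) ≤ z := by exact_mod_cast (hQ l hl).2.1
                gcongr
      _ = (Q m z).card * (6 * Real.sqrt z) := by rw [Finset.sum_const, nsmul_eq_mul]
      _ ≤ z * (6 * Real.sqrt z) := by
          have : (Q m z).card ≤ z := by
            calc (Q m z).card ≤ (Finset.Icc 1 z).card := Finset.card_filter_le _ _
              _ = z := by simp
          have : ((Q m z).card : ℝ) ≤ z := by exact_mod_cast this
          gcongr
  have herr2 : (∑ i ∈ I, |a i|) ^ 2 ≤ 36 * (z : ℝ) ^ 3 := by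
    calc (∑ i ∈ I, |a i|) ^ 2 ≤ (z * (6 * Real.sqrt z)) ^ 2 := by
          gcongr
      _ = 36 * (z : ℝ) ^ 2 * (Real.sqrt z) ^ 2 := by ring
      _ = _ := by rw [Real.sq_sqrt (by positivity)]; ring
  rw [hmain] at hsq
  -- S ≥ 1
  have hS1 : 1 ≤ S := by
    have h1 : 1 ∈ Q m z := by simp [Q, hz]
    have := Finset.single_le_sum (f := fun l : ℕ => 1 / (l.totient : ℝ))
      (fun i _ => by positivity) h1
    simpa [hS] using this
  have hSlog := S_ge m z hm
  rw [← hS] at hSlog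
  -- lower bound
  set P := (Finset.Ioc 0 N).filter (fun j => (m * j + 1).Prime ∧ z < m * j + 1) with hP
  have hlow : (P.card : ℝ) * S ^ 2 ≤
      ∑ j ∈ Finset.Ioc 0 N, (∑ i ∈ I, if i.2 ∣ m * j + 1 then a i else 0) ^ 2 := by
    calc (P.card : ℝ) * S ^ 2 = ∑ j ∈ P, S ^ 2 := by rw [Finset.sum_const, nsmul_eq_mul]
      _ = ∑ j ∈ P, (∑ i ∈ I, if i.2 ∣ m * j + 1 then a i else 0) ^ 2 := by
          apply Finset.sum_congr rfl
          intro j hj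
          simp only [hP, Finset.mem_filter] at hj
          congr 1
          rw [hI, Finset.sum_sigma, hS]
          apply Finset.sum_congr rfl
          intro l hl
          rw [Finset.sum_eq_single 1]
          · simp only [isUnit_one, IsUnit.dvd, if_true, ha, Nat.div_one, Nat.cast_one, one_mul]
            rw [div_mul_eq_mul_div, mu_sq (hQ l hl).2.2.1]
          · intro d hd hd1
            rw [if_neg]
            intro hdvd
            have h5 : d = 1 ∨ d = m * j + 1 := (Nat.dvd_prime hj.2.1).1 hdvd
            have h6 := Nat.divisor_le hd
            have h7 := (hQ l hl).2.1
            rcases h5 with h5 | h5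
            · exact hd1 h5
            · omega
          · intro h
            exact absurd (Nat.one_mem_divisors.2 (by have := (hQ l hl).1; omega)) h
      _ ≤ _ := by
          apply Finset.sum_le_sum_of_subset_of_nonneg (Finset.filter_subset _ _)
          intro i _ _
          positivity
  have hPle : (P.card : ℝ) ≤ N / S + 36 * (z : ℝ) ^ 3 := by
    have h1 : (P.card : ℝ) * S ^ 2 ≤ N * S + 36 * (z : ℝ) ^ 3 := by linarith
    have h2 : (P.card : ℝ) * S ^ 2 ≤ (N / S + 36 * (z : ℝ) ^ 3) * S ^ 2 := by
      have h3 : (N / S + 36 * (z : ℝ) ^ 3) * S ^ 2 = N * S + 36 * (z : ℝ) ^ 3 * S ^ 2 := by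
        field_simp
      rw [h3]
      have : (1 : ℝ) ≤ S ^ 2 := one_le_pow₀ hS1
      have h4 : 36 * (z : ℝ) ^ 3 * 1 ≤ 36 * (z : ℝ) ^ 3 * S ^ 2 := by gcongr
      linarith
    exact le_of_mul_le_mul_right h2 (by positivity)
  have hcard : ((Finset.Ioc 0 N).filter (fun j => (m * j + 1).Prime)).card ≤ P.card + z := by
    have : (Finset.Ioc 0 N).filter (fun j => (m * j + 1).Prime) ⊆ P ∪ Finset.Ioc 0 z := by
      intro j hj
      simp only [Finset.mem_filter, Finset.mem_Ioc] at hj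
      simp only [hP, Finset.mem_union, Finset.mem_filter, Finset.mem_Ioc]
      by_cases h : z < m * j + 1
      · left; exact ⟨hj.1, hj.2, h⟩
      · right
        refine ⟨hj.1.1, ?_⟩
        have : 1 * j ≤ m * j := Nat.mul_le_mul_right j (Nat.pos_of_ne_zero hm)
        omega
    calc _ ≤ (P ∪ Finset.Ioc 0 z).card := Finset.card_le_card this
      _ ≤ P.card + (Finset.Ioc 0 z).card := Finset.card_union_le _ _
      _ = _ := by simp
  have hcardR : (((Finset.Ioc 0 N).filter (fun j => (m * j + 1).Prime)).card : ℝ) ≤ P.card + z := by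
    exact_mod_cast hcard
  have hzR : (1 : ℝ) ≤ z := by exact_mod_cast hz
  have hz3 : (z : ℝ) ≤ (z : ℝ) ^ 3 := le_self_pow₀ hzR (by norm_num)
  have hlogpos : 0 < Real.log ((z : ℝ) + 1) := Real.log_pos (by linarith)
  have hNS : (N : ℝ) / S ≤ (m : ℝ) / m.totient * (N / Real.log ((z : ℝ) + 1)) := by
    rw [div_le_iff₀ (by linarith)]
    have : (m : ℝ) / m.totient * (N / Real.log ((z : ℝ) + 1)) * S =
      N * (((m : ℝ) / m.totient * S) / Real.log ((z : ℝ) + 1)) := by ring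
    rw [this]
    have h1 : 1 ≤ ((m : ℝ) / m.totient * S) / Real.log ((z : ℝ) + 1) := by
      rw [le_div_iff₀ hlogpos]; linarith
    have h2 : (N : ℝ) * 1 ≤ N * (((m : ℝ) / m.totient * S) / Real.log ((z : ℝ) + 1)) := by gcongr
    linarith
  linarith

end PV

namespace PV

lemma primePi_eq (y : ℝ) (hy : 0 ≤ y) : primePi y = Nat.primeCounting ⌊y⌋₊ := by
  have : {p : ℕ | p.Prime ∧ (p : ℝ) ≤ y} =
      (((Finset.range (⌊y⌋₊ + 1)).filter Nat.Prime : Finset ℕ) : Set ℕ) := by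
    ext p
    simp only [Set.mem_ofPred_eq, Finset.coe_filter, Finset.mem_range, Nat.lt_succ_iff,
      Nat.le_floor_iff hy]
    tauto
  unfold primePi
  rw [this, Set.ncard_coe_finset, Nat.primeCounting, Nat.primeCounting', Nat.count_eq_card_filter_range]

lemma primePi_ge : ∀ᶠ y : ℝ in Filter.atTop, (2 / 3 : ℝ) * y / Real.log y ≤ primePi y := by
  have h1 : ∀ᶠ y : ℝ in Filter.atTop, ‖Real.log y‖ ≤ 0.01 * ‖y‖ :=
    Real.isLittleO_log_id_atTop.bound (by norm_num)
  filter_upwards [h1, Filter.eventually_ge_atTop 1000,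
    (Filter.tendsto_atTop_add_const_right Filter.atTop 2 Filter.tendsto_id).eventually h1]
    with y h1 h2 h3
  have hlog : 0 < Real.log y := Real.log_pos (by linarith)
  simp only [id] at h3
  rw [Real.norm_of_nonneg (Real.log_nonneg (by linarith)), Real.norm_of_nonneg (by linarith)] at h3
  have h4 := Chebyshev.pi_ge' (x := y) (by linarith)
  rw [primePi_eq y (by linarith)]
  refine le_trans ?_ h4
  have h5 := Real.log_two_gt_d9
  gcongr
  nlinarith

lemma bad_bound (d q : ℕ) (X ℓ c : ℝ) (hd : 0 < d) (hqp : q.Prime) (hq : 32 ≤ q) (hℓ : 0 < ℓ) (hc : 0 < c)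
    (hc1 : c ≤ 1) (hY : 1 ≤ X / q)
    (hlogY : c / 2 * ℓ ≤ Real.log (X / q)) (hpow : 3700 * ℓ ≤ (X / q) ^ (0.04 : ℝ)) :
    (((Finset.Ioc 0 ⌊X / q⌋₊).filter (fun j => (d * q * j + 1).Prime)).card : ℝ) ≤
      (d : ℝ) / d.totient * (X / ℓ) * (6.47 / c) * (1 / (q : ℝ)) := by
  set Y := X / q with hYdef
  set z := ⌊Y ^ (0.32 : ℝ)⌋₊ with hz
  have hY0 : 0 < Y := by linarith
  have hqR : (32 : ℝ) ≤ q := by exact_mod_cast hq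
  have hXY : X = Y * q := by rw [hYdef]; field_simp
  have hz1 : 1 ≤ z := Nat.le_floor (by simpa using Real.one_le_rpow hY (by norm_num))
  have hs := sieve (d * q) ⌊Y⌋₊ z (by positivity) hz1
  have hφd : (0 : ℝ) < d.totient := by exact_mod_cast Nat.totient_pos.2 hd
  have hφ : (d.totient : ℝ) * ((31 / 32) * q) ≤ (d * q).totient := by
    have h1 : d.totient * q.totient ≤ (d * q).totient := Nat.totient_super_multiplicative d q
    rw [Nat.totient_prime hqp] at h1
    have h2 : ((d.totient * (q - 1) : ℕ) : ℝ) ≤ (d * q).totient := by exact_mod_cast h1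
    rw [Nat.cast_mul, Nat.cast_sub (by omega), Nat.cast_one] at h2
    refine le_trans ?_ h2
    gcongr
    linarith
  have hlogz : 0.16 * c * ℓ ≤ Real.log ((z : ℝ) + 1) := by
    have h1 : Y ^ (0.32 : ℝ) ≤ (z : ℝ) + 1 := (Nat.lt_floor_add_one _).le
    have h2 : Real.log (Y ^ (0.32 : ℝ)) ≤ Real.log ((z : ℝ) + 1) :=
      Real.log_le_log (by positivity) h1
    rw [Real.log_rpow hY0] at h2
    nlinarith
  have hz3 : 37 * (z : ℝ) ^ 3 ≤ 0.01 * (Y / ℓ) := by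
    have h1 : (z : ℝ) ≤ Y ^ (0.32 : ℝ) := Nat.floor_le (by positivity)
    have h2 : (z : ℝ) ^ 3 ≤ Y ^ (0.96 : ℝ) := by
      calc (z : ℝ) ^ 3 ≤ (Y ^ (0.32 : ℝ)) ^ 3 := by gcongr
        _ = Y ^ (0.96 : ℝ) := by
          rw [← Real.rpow_natCast, ← Real.rpow_mul hY0.le]; norm_num
    have h3 : Y ^ (0.96 : ℝ) * Y ^ (0.04 : ℝ) = Y := by
      rw [← Real.rpow_add hY0]; norm_num
    have h4 : Y ^ (0.96 : ℝ) * (3700 * ℓ) ≤ Y := by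
      calc _ ≤ Y ^ (0.96 : ℝ) * Y ^ (0.04 : ℝ) := by gcongr
        _ = Y := h3
    have h5 : Y ^ (0.96 : ℝ) * 3700 ≤ Y / ℓ := by
      rw [le_div_iff₀ hℓ]; linarith
    linarith
  set W := (d : ℝ) / d.totient * (Y / (c * ℓ)) with hW
  have hd1 : 1 ≤ (d : ℝ) / d.totient := by
    rw [le_div_iff₀ hφd, one_mul]
    exact_mod_cast Nat.totient_le d
  have ht2 : Y / ℓ ≤ W := by
    have h1 : Y / ℓ ≤ Y / (c * ℓ) := by
      apply div_le_div_of_nonneg_left hY0.le (by positivity)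
      nlinarith
    have h2 : 1 * (Y / (c * ℓ)) ≤ W := by
      rw [hW]; gcongr
    linarith
  have ht1 : ((d * q : ℕ) : ℝ) / (d * q).totient * (⌊Y⌋₊ / Real.log ((z : ℝ) + 1)) ≤ 6.455 * W := by
    have hfl : (⌊Y⌋₊ : ℝ) ≤ Y := Nat.floor_le hY0.le
    have hlp : 0 ≤ Real.log ((z : ℝ) + 1) := le_trans (by positivity) hlogz
    have hfp : 0 ≤ (⌊Y⌋₊ : ℝ) / Real.log ((z : ℝ) + 1) := div_nonneg (by positivity) hlp
    calc ((d * q : ℕ) : ℝ) / (d * q).totient * (⌊Y⌋₊ / Real.log ((z : ℝ) + 1))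
        ≤ ((d * q : ℕ) : ℝ) / ((d.totient : ℝ) * ((31 / 32) * q)) * (Y / (0.16 * c * ℓ)) := by
          gcongr
      _ = (32 / 31 / 0.16) * W := by
          rw [hW]; push_cast; field_simp
      _ ≤ _ := by
          have : 0 ≤ W := by positivity
          have : (32 / 31 / 0.16 : ℝ) ≤ 6.455 := by norm_num
          gcongr
  have hfin : (d : ℝ) / d.totient * (X / ℓ) * (6.47 / c) * (1 / (q : ℝ)) = 6.47 * W := by
    rw [hW, hXY]; field_simp
  rw [hfin]
  have : 0 ≤ W := by positivity
  linarith

lemma evens_card (X : ℝ) (hX : 0 ≤ X) :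
    (((Finset.Icc 1 ⌊X⌋₊).filter (fun k => Even k)).card : ℝ) ≤ X / 2 := by
  have h1 : ((Finset.Icc 1 ⌊X⌋₊).filter (fun k => Even k)).card ≤ ⌊X⌋₊ / 2 := by
    calc _ ≤ (Finset.Icc 1 (⌊X⌋₊ / 2)).card := by
          apply Finset.card_le_card_of_injOn (fun k => k / 2)
          · intro k hk
            simp only [Finset.coe_filter, Finset.mem_Icc, Set.mem_ofPred_eq, Nat.even_iff] at hk
            simp only [Finset.coe_Icc, Set.mem_Icc]
            omega
          · intro a ha b hb hab
            simp only [Finset.coe_filter, Finset.mem_Icc, Set.mem_ofPred_eq, Nat.even_iff] at ha hb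
            simp only at hab
            omega
      _ = _ := by simp
  have h2 : ((⌊X⌋₊ / 2 : ℕ) : ℝ) ≤ (⌊X⌋₊ : ℝ) / 2 := Nat.cast_div_le
  have h3 : (⌊X⌋₊ : ℝ) ≤ X := Nat.floor_le hX
  have h4 : (((Finset.Icc 1 ⌊X⌋₊).filter (fun k => Even k)).card : ℝ) ≤ ((⌊X⌋₊ / 2 : ℕ) : ℝ) := by
    exact_mod_cast h1
  linarith

lemma half_count (L q₀ : ℕ) (B : ℝ) (hL : Squarefree L) (hq₀ : 1 < q₀) :
    ((L.divisors.filter (fun d : ℕ => (d : ℝ) ≤ B)).card : ℝ) ≤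
      2 * ((L.divisors.filter (fun d : ℕ => (d : ℝ) ≤ B ∧ ¬ q₀ ∣ d)).card : ℝ) := by
  have h1 : (L.divisors.filter (fun d : ℕ => (d : ℝ) ≤ B ∧ q₀ ∣ d)).card ≤
      (L.divisors.filter (fun d : ℕ => (d : ℝ) ≤ B ∧ ¬ q₀ ∣ d)).card := by
    apply Finset.card_le_card_of_injOn (fun d => d / q₀)
    · intro d hd
      simp only [Finset.coe_filter, Nat.mem_divisors, Set.mem_ofPred_eq] at hd ⊢
      obtain ⟨⟨hdL, hL0⟩, hdB, ⟨t, rfl⟩⟩ := hd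
      rw [Nat.mul_div_cancel_left _ (by omega)]
      refine ⟨⟨(Dvd.intro_left q₀ rfl).trans hdL, hL0⟩, ?_, ?_⟩
      · refine le_trans ?_ hdB
        have : t ≤ q₀ * t := Nat.le_mul_of_pos_left t (by omega)
        exact_mod_cast this
      · intro hdvd
        have h2 : q₀ * q₀ ∣ L := (Nat.mul_dvd_mul_left q₀ hdvd).trans hdL
        have := hL q₀ h2
        rw [Nat.isUnit_iff] at this
        omega
    · intro a ha b hb hab
      simp only [Finset.coe_filter, Nat.mem_divisors, Set.mem_ofPred_eq] at ha hb
      obtain ⟨_, _, ⟨t, rfl⟩⟩ := ha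
      obtain ⟨_, _, ⟨s, rfl⟩⟩ := hb
      simp only [Nat.mul_div_cancel_left _ (show 0 < q₀ by omega)] at hab
      rw [hab]
  have h2 := Finset.card_filter_add_card_filter_not (s := L.divisors.filter (fun d : ℕ => (d : ℝ) ≤ B))
    (fun d => q₀ ∣ d)
  rw [Finset.filter_filter, Finset.filter_filter] at h2
  rw [← h2]
  push_cast
  have h3 : ((L.divisors.filter (fun d : ℕ => (d : ℝ) ≤ B ∧ q₀ ∣ d)).card : ℝ) ≤
      ((L.divisors.filter (fun d : ℕ => (d : ℝ) ≤ B ∧ ¬ q₀ ∣ d)).card : ℝ) := by exact_mod_cast h1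
  linarith

end PV

namespace PV

open Classical in
/-- good multipliers for `d` -/
noncomputable def good (f : Polynomial ℤ) (L : ℕ) (X : ℝ) (d : ℕ) : Finset ℕ :=
  (Finset.Icc 1 ⌊X⌋₊).filter (fun k => Even k ∧ k.Coprime L ∧ ((d * k + 1 : ℕ) : ℝ) ≤ d * X ∧
    (d * k + 1).Prime ∧ SplitsModLinear f (d * k + 1))

lemma count_le (f : Polynomial ℤ) (L d : ℕ) (X : ℝ) (hX : 0 < X) (hL0 : L ≠ 0) (hd : d ∣ L)
    (hodd : ¬ 2 ∣ L) :
    {p : ℕ | p.Prime ∧ (p : ℝ) < d * X ∧ (p : ℤ) ≡ 1 [ZMOD (d : ℤ)] ∧ SplitsModLinear f p}.ncard ≤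
      (good f L X d).card + ∑ q ∈ L.primeFactors,
        ((Finset.Ioc 0 ⌊X / q⌋₊).filter (fun j => (d * q * j + 1).Prime)).card + 1 := by
  have hd0 : 0 < d := Nat.pos_of_dvd_of_pos hd (Nat.pos_of_ne_zero hL0)
  have hdR : (0 : ℝ) < d := by exact_mod_cast hd0
  set T : Finset ℕ := (good f L X d ∪ (L.primeFactors.biUnion fun q =>
    ((Finset.Ioc 0 ⌊X / q⌋₊).filter (fun j => (d * q * j + 1).Prime)).image (fun j => q * j))) ∪ {1}
    with hT
  have hsub : {p : ℕ | p.Prime ∧ (p : ℝ) < d * X ∧ (p : ℤ) ≡ 1 [ZMOD (d : ℤ)] ∧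
      SplitsModLinear f p} ⊆ ((T.image (fun k => d * k + 1) : Finset ℕ) : Set ℕ) := by
    rintro p ⟨hp, hpX, hmod, hspl⟩
    have hdvd : d ∣ p - 1 := by
      have h1 : (1 : ℕ) ≡ p [MOD d] := by
        rw [← Int.natCast_modEq_iff]; exact_mod_cast hmod.symm
      exact (Nat.modEq_iff_dvd' hp.one_lt.le).1 h1
    obtain ⟨k, hk⟩ := hdvd
    have hpk : p = d * k + 1 := by have := hp.one_lt; omega
    have hk0 : 0 < k := by
      rcases Nat.eq_zero_or_pos k with rfl | h
      · have := hp.one_lt; simp at hpk; omega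
      · exact h
    subst hpk
    rw [Finset.mem_coe, Finset.mem_image]
    refine ⟨k, ?_, rfl⟩
    have hkX : (k : ℝ) < X := by
      push_cast at hpX
      have : (d : ℝ) * k < d * X := by linarith
      exact lt_of_mul_lt_mul_left this hdR.le
    rw [hT, Finset.mem_union, Finset.mem_union]
    by_cases hk1 : k = 1
    · right; simp [hk1]
    left
    have hev : Even k := by
      by_contra hne
      have hdo : Odd d := by
        rw [← Nat.not_even_iff_odd, even_iff_two_dvd]
        exact fun h => hodd (h.trans hd)
      have hko : Odd k := Nat.not_even_iff_odd.1 hne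
      have : Even (d * k + 1) := (hdo.mul hko).add_one
      have h2 := (hp.even_iff).1 this
      have : 1 * k ≤ d * k := Nat.mul_le_mul_right k hd0
      omega
    by_cases hcop : k.Coprime L
    · left
      simp only [good, Finset.mem_filter, Finset.mem_Icc]
      exact ⟨⟨hk0, Nat.le_floor hkX.le⟩, hev, hcop, hpX.le, hp, hspl⟩
    · right
      obtain ⟨q, hq, hqk, hqL⟩ := Nat.Prime.not_coprime_iff_dvd.1 hcop
      obtain ⟨j, rfl⟩ := hqk
      rw [Finset.mem_biUnion]
      refine ⟨q, by simp [hq, hqL, hL0], ?_⟩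
      rw [Finset.mem_image]
      refine ⟨j, ?_, rfl⟩
      simp only [Finset.mem_filter, Finset.mem_Ioc]
      refine ⟨⟨Nat.pos_of_mul_pos_left hk0, ?_⟩, by rwa [mul_assoc]⟩
      apply Nat.le_floor
      have hqR : (0 : ℝ) < q := by exact_mod_cast hq.pos
      rw [le_div_iff₀ hqR]
      push_cast at hkX
      linarith
  calc _ ≤ ((T.image (fun k => d * k + 1) : Finset ℕ) : Set ℕ).ncard :=
        Set.ncard_le_ncard hsub (Finset.finite_toSet _)
    _ = (T.image (fun k => d * k + 1)).card := Set.ncard_coe_finset _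
    _ ≤ T.card := Finset.card_image_le
    _ ≤ _ := by
      rw [hT]
      refine (Finset.card_union_le _ _).trans ?_
      rw [Finset.card_singleton]
      refine Nat.add_le_add_right ((Finset.card_union_le _ _).trans ?_) 1
      refine Nat.add_le_add_left (Finset.card_biUnion_le.trans ?_) _
      exact Finset.sum_le_sum fun q _ => Finset.card_image_le

lemma per_d (f : Polynomial ℤ) (n L d : ℕ) (x η X : ℝ) (hn : 1 ≤ n) (hη0 : 0 < η) (hη1 : η < 1)
    (hx : 1 < x) (hX : X = x ^ (1 - η))
    (hE1 : 3700 * Real.log x ≤ x ^ (0.02 * (1 - η)))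
    (hE2 : 200 * n * Real.log x ≤ X)
    (hE3 : ∀ y, X ≤ y → (2 / 3 : ℝ) * y / Real.log y ≤ primePi y)
    (hL0 : L ≠ 0) (hd : d ∣ L) (hdx : (d : ℝ) ≤ x ^ η)
    (hLp : ∀ p : ℕ, p.Prime → p ∣ L → (p : ℝ) ≤ x ^ ((1 - η) / 2))
    (hLs : (∑ q ∈ L.primeFactors, (1 : ℝ) / (q : ℝ)) ≤ (1 - η) / (32 * (n : ℝ)))
    (hcount : (primePi (d * X) : ℝ) / (2 * (n : ℝ) * (Nat.totient d : ℝ)) ≤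
      ({p : ℕ | p.Prime ∧ (p : ℝ) < d * X ∧ (p : ℤ) ≡ 1 [ZMOD (d : ℤ)] ∧
        SplitsModLinear f p}.ncard : ℝ)) :
    X / (8 * n * Real.log x) ≤ ((good f L X d).card : ℝ) := by
  have hd0 : 0 < d := Nat.pos_of_dvd_of_pos hd (Nat.pos_of_ne_zero hL0)
  have hdR : (1 : ℝ) ≤ d := by exact_mod_cast hd0
  have hnR : (1 : ℝ) ≤ n := by exact_mod_cast hn
  have hx0 : 0 < x := by linarith
  have hX0 : 0 < X := by rw [hX]; positivity
  have hX1 : 1 < X := by rw [hX]; exact Real.one_lt_rpow hx (by linarith)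
  set ℓ := Real.log x with hℓdef
  have hℓ : 0 < ℓ := Real.log_pos hx
  set c := 1 - η with hc
  have hc0 : 0 < c := by rw [hc]; linarith
  have hc1 : c ≤ 1 := by rw [hc]; linarith
  have hφd : (0 : ℝ) < d.totient := by exact_mod_cast Nat.totient_pos.2 hd0
  -- prime factors of L are at least 32
  have hq32 : ∀ q ∈ L.primeFactors, 32 ≤ q := by
    intro q hq
    have hqp := Nat.prime_of_mem_primeFactors hq
    have hqR : (0 : ℝ) < q := by exact_mod_cast hqp.pos
    have h1 := Finset.single_le_sum (f := fun q : ℕ => (1 : ℝ) / (q : ℝ))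
      (fun i _ => by positivity) hq
    have h2 : c / (32 * (n : ℝ)) ≤ 1 / 32 := by
      apply div_le_div₀ <;> linarith
    have h3 : (1 : ℝ) / q ≤ 1 / 32 := h1.trans (hLs.trans h2)
    have h4 : (32 : ℝ) ≤ q := (one_div_le_one_div hqR (by norm_num)).1 h3
    exact_mod_cast h4
  have hodd : ¬ 2 ∣ L := by
    intro h
    have := hq32 2 (by simp [Nat.prime_two, h, hL0])
    omega
  have hcl := count_le f L d X hX0 hL0 hd hodd
  have hclR : ({p : ℕ | p.Prime ∧ (p : ℝ) < d * X ∧ (p : ℤ) ≡ 1 [ZMOD (d : ℤ)] ∧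
        SplitsModLinear f p}.ncard : ℝ) ≤ ((good f L X d).card : ℝ) + ∑ q ∈ L.primeFactors,
        (((Finset.Ioc 0 ⌊X / q⌋₊).filter (fun j => (d * q * j + 1).Prime)).card : ℝ) + 1 := by
    exact_mod_cast hcl
  set V := (d : ℝ) / d.totient * (X / ℓ) with hV
  have hd1 : 1 ≤ (d : ℝ) / d.totient := by
    rw [le_div_iff₀ hφd, one_mul]
    exact_mod_cast Nat.totient_le d
  have hV1 : X / ℓ ≤ V := by
    have : 1 * (X / ℓ) ≤ V := by rw [hV]; gcongr
    linarith
  have hV0 : 0 ≤ V := by positivity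
  have hbad : ∑ q ∈ L.primeFactors,
        (((Finset.Ioc 0 ⌊X / q⌋₊).filter (fun j => (d * q * j + 1).Prime)).card : ℝ) ≤
        (6.47 / 32) * (V / n) := by
    calc _ ≤ ∑ q ∈ L.primeFactors, V * (6.47 / c) * (1 / (q : ℝ)) := by
          apply Finset.sum_le_sum
          intro q hq
          have hqp := Nat.prime_of_mem_primeFactors hq
          have hqR : (0 : ℝ) < q := by exact_mod_cast hqp.pos
          have hqx := hLp q hqp (Nat.dvd_of_mem_primeFactors hq)
          have hY : x ^ (c / 2) ≤ X / q := by
            rw [le_div_iff₀ hqR]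
            calc x ^ (c / 2) * q ≤ x ^ (c / 2) * x ^ (c / 2) := by gcongr
              _ = X := by rw [← Real.rpow_add hx0, hX]; congr 1; ring
          have hY1 : 1 ≤ x ^ (c / 2) := Real.one_le_rpow hx.le (by positivity)
          apply bad_bound d q X ℓ c hd0 hqp (hq32 q hq) hℓ hc0 hc1 (hY1.trans hY)
          · have := Real.log_le_log (by positivity) hY
            rwa [Real.log_rpow hx0] at this
          · refine hE1.trans ?_
            calc x ^ (0.02 * c) = (x ^ (c / 2)) ^ (0.04 : ℝ) := by
                  rw [← Real.rpow_mul hx0.le]; congr 1; ring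
              _ ≤ _ := by gcongr
      _ = V * (6.47 / c) * ∑ q ∈ L.primeFactors, 1 / (q : ℝ) := by rw [Finset.mul_sum]
      _ ≤ V * (6.47 / c) * (c / (32 * (n : ℝ))) := by gcongr
      _ = _ := by field_simp
  have hpi : (1 / 3) * (V / n) ≤ (primePi (d * X) : ℝ) / (2 * (n : ℝ) * (Nat.totient d : ℝ)) := by
    have hy : X ≤ d * X := by nlinarith
    have h1 := hE3 (d * X) hy
    have h2 : Real.log (d * X) ≤ ℓ := by
      rw [hℓdef]
      apply Real.log_le_log (by positivity)
      calc (d : ℝ) * X ≤ x ^ η * x ^ c := by rw [hX]; gcongr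
        _ = x := by rw [← Real.rpow_add hx0, hc]; simp
    have h3 : 0 < Real.log (d * X) := Real.log_pos (by linarith)
    have h4 : (2 / 3 : ℝ) * (d * X) / ℓ ≤ primePi (d * X) := by
      refine le_trans ?_ h1
      gcongr
    rw [le_div_iff₀ (by positivity)]
    refine le_trans (le_of_eq ?_) h4
    rw [hV]
    field_simp
  have hone : (1 : ℝ) ≤ 0.005 * (V / n) := by
    have h1 : 200 * n ≤ X / ℓ := by rw [le_div_iff₀ hℓ]; linarith
    have h2 : 200 * (n : ℝ) ≤ V := by linarith
    have h3 : 200 ≤ V / n := by rw [le_div_iff₀ (by linarith)]; linarith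
    linarith
  have hfin : X / (8 * n * ℓ) ≤ (1 / 8) * (V / n) := by
    have : X / (8 * n * ℓ) = (1 / 8) * ((X / ℓ) / n) := by field_simp
    rw [this]
    gcongr
  have hVn : 0 ≤ V / n := by positivity
  linarith

end PV
namespace PV

lemma large_eta (f : Polynomial ℤ) (n : ℕ) (hn : 1 ≤ n) (η : ℝ) (hη : 1 / 2 ≤ η) (x : ℝ)
    (hx : 1000000 ≤ x) (q₀ : ℕ) (hq₀ : 1 < q₀)
    (H : ∀ y : ℝ, x ^ ((1 : ℝ) / 2) < y → y ≤ x →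
          ∀ q : ℕ, 0 < q → (q : ℝ) ≤ x ^ η → ¬ (q₀ ∣ q) →
            ∀ a : ℤ, Int.gcd a (q : ℤ) = 1 →
              (primePi y : ℝ) / (2 * (n : ℝ) * (Nat.totient q : ℝ)) ≤
                ({p : ℕ | p.Prime ∧ (p : ℝ) < y ∧ (p : ℤ) ≡ a [ZMOD (q : ℤ)] ∧
                  SplitsModLinear f p}.ncard : ℝ)) : False := by
  set s := x ^ ((1 : ℝ) / 2) with hs
  have hss : s * s = x := by
    rw [hs, ← Real.rpow_add (by linarith)]; norm_num
  have hs0 : 0 ≤ s := by rw [hs]; positivity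
  have hs1 : 1000 ≤ s := by nlinarith
  set N := ⌊s⌋₊ with hN
  have hN1 : 1000 ≤ N := Nat.le_floor (by exact_mod_cast hs1)
  have hNs : (N : ℝ) ≤ s := Nat.floor_le hs0
  have hsN : s < N + 1 := Nat.lt_floor_add_one s
  obtain ⟨q, hqN, hqN', hqodd, hqd⟩ : ∃ q : ℕ, q ≤ N ∧ N ≤ q + 3 ∧ Odd q ∧ ¬ q₀ ∣ q := by
    obtain ⟨m, hm1, hm2, hm3⟩ : ∃ m : ℕ, m ≤ N ∧ N ≤ m + 1 ∧ Odd m := by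
      rcases Nat.even_or_odd N with h | h
      · refine ⟨N - 1, by omega, by omega, ?_⟩
        rw [Nat.odd_iff]; rw [Nat.even_iff] at h; omega
      · exact ⟨N, le_rfl, by omega, h⟩
    by_cases h : q₀ ∣ m
    · refine ⟨m - 2, by omega, by omega, ?_, ?_⟩
      · rw [Nat.odd_iff] at *; omega
      · intro h'
        have h2 : q₀ ∣ 2 := by
          have := Nat.dvd_sub h h'
          have h3 : m - (m - 2) = 2 := by omega
          rwa [h3] at this
        have h4 : q₀ = 2 := ((Nat.dvd_prime Nat.prime_two).1 h2).resolve_left (by omega)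
        rw [h4] at h
        rw [Nat.odd_iff] at hm3
        omega
    · exact ⟨m, hm1, by omega, hm3, h⟩
  have hcop : Int.gcd (64 : ℤ) (q : ℤ) = 1 := by
    have : Nat.Coprime (2 ^ 6) q := Nat.Coprime.pow_left 6 (Nat.coprime_two_left.2 hqodd)
    exact_mod_cast this
  have h := H (s + 1) (by linarith) (by nlinarith) q (by omega) (by
    calc (q : ℝ) ≤ N := by exact_mod_cast hqN
      _ ≤ s := hNs
      _ ≤ x ^ η := Real.rpow_le_rpow_of_exponent_le (by linarith) hη) hqd 64 hcop
  have hempty : {p : ℕ | p.Prime ∧ (p : ℝ) < s + 1 ∧ (p : ℤ) ≡ 64 [ZMOD (q : ℤ)] ∧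
                  SplitsModLinear f p} = ∅ := by
    rw [Set.eq_empty_iff_forall_notMem]
    rintro p ⟨hp, hps, hmod, _⟩
    have hpN : p < N + 2 := by
      have : (p : ℝ) < N + 2 := by linarith
      exact_mod_cast this
    have hmod' : p ≡ 64 [MOD q] := by
      rw [← Int.natCast_modEq_iff]; exact_mod_cast hmod
    by_cases hpq : p < q
    · have : p = 64 := Nat.ModEq.eq_of_lt_of_lt hmod' hpq (by omega)
      rw [this] at hp
      norm_num at hp
    · have h1 : p - q ≡ 64 [MOD q] := by
        have : p - q + q ≡ 64 [MOD q] := by rwa [Nat.sub_add_cancel (by omega)]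
        simpa [Nat.ModEq] using this
      have : p - q = 64 := Nat.ModEq.eq_of_lt_of_lt h1 (by omega) (by omega)
      omega
  rw [hempty, Set.ncard_empty] at h
  have hpi : 0 < primePi (s + 1) := by
    rw [primePi_eq _ (by linarith)]
    have : (2 : ℕ) ≤ ⌊s + 1⌋₊ := Nat.le_floor (by push_cast; linarith)
    calc 0 < Nat.primeCounting 2 := by decide
      _ ≤ _ := Nat.monotone_primeCounting this
  have hphi : 0 < q.totient := Nat.totient_pos.2 (by omega)
  have : (0 : ℝ) < (primePi (s + 1) : ℝ) / (2 * (n : ℝ) * (Nat.totient q : ℝ)) := by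
    have : (0 : ℝ) < primePi (s + 1) := by exact_mod_cast hpi
    have : (0 : ℝ) < q.totient := by exact_mod_cast hphi
    have : (0 : ℝ) < n := by exact_mod_cast hn
    positivity
  norm_num at h
  linarith

lemma thresholds (n : ℕ) (η : ℝ) (hη1 : η < 1) : ∃ x₁ : ℝ, ∀ x : ℝ, x₁ ≤ x →
    1000000 ≤ x ∧ 3700 * Real.log x ≤ x ^ (0.02 * (1 - η)) ∧ 200 * n * Real.log x ≤ x ^ (1 - η) ∧
    ∀ y, x ^ (1 - η) ≤ y → (2 / 3 : ℝ) * y / Real.log y ≤ primePi y := by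
  have hlog : ∀ (C a : ℝ), 0 < C → 0 < a → ∀ᶠ x : ℝ in Filter.atTop, C * Real.log x ≤ x ^ a := by
    intro C a hC ha
    have h1 := (isLittleO_log_rpow_atTop ha).bound (c := 1 / C) (by positivity)
    filter_upwards [h1, Filter.eventually_ge_atTop 1] with x hx h2
    rw [Real.norm_of_nonneg (Real.log_nonneg h2), Real.norm_of_nonneg (by positivity)] at hx
    calc C * Real.log x ≤ C * (1 / C * x ^ a) := by gcongr
      _ = x ^ a := by field_simp
  obtain ⟨Y, hY⟩ := Filter.eventually_atTop.1 primePi_ge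
  have hc : 0 < 1 - η := by linarith
  have h3 : ∀ᶠ x : ℝ in Filter.atTop, Y ≤ x ^ (1 - η) :=
    (tendsto_rpow_atTop hc).eventually_ge_atTop Y
  obtain ⟨x₁, h⟩ := Filter.eventually_atTop.1
    ((Filter.eventually_ge_atTop (1000000 : ℝ)).and ((hlog 3700 (0.02 * (1 - η)) (by norm_num)
      (by positivity)).and ((hlog (200 * n + 1) (1 - η) (by positivity) hc).and h3)))
  refine ⟨x₁, fun x hx => ?_⟩
  obtain ⟨a1, a2, a3, a4⟩ := h x hx
  refine ⟨a1, a2, ?_, fun y hy => hY y (a4.trans hy)⟩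
  have : 0 ≤ Real.log x := Real.log_nonneg (by linarith)
  linarith

end PV

/-- Variant of Prachar's theorem: with `K` the splitting field of `f`, `n = [K:ℚ]`,
`0 < η < 1`, and `x` sufficiently large (in terms of `K` and `η`), if there is an integer
`q₀ > log x` such that for every `x^(1/2) < y ≤ x`, every `q ≤ x^η` with `q₀ ∤ q`, and
every `a` with `gcd(a,q) = 1` the number of primes `p < y`, `p ≡ a (mod q)`, with `f`
splitting into linear factors mod `p` is at least `π(y)/(2 n φ(q))`, then for every
squarefree `L` whose prime factors are `≤ x^((1-η)/2)` and with `∑_{q | L} 1/q ≤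
(1-η)/(32 n)`, there is a positive integer `k ≤ x^(1-η)` coprime to `L` such that
`#{d ∣ L : dk+1 ≤ x is prime and f splits mod dk+1} ≥ #{d ∣ L : d ≤ x^η}/(8 n log x)`. -/
theorem prachar_variant (f : Polynomial ℤ) (hmonic : f.Monic)
    (K : Type*) [Field K] [Algebra ℚ K]
    (hK : Polynomial.IsSplittingField ℚ K (f.map (Int.castRingHom ℚ)))
    (n : ℕ) (hn : n = Module.finrank ℚ K)
    (η : ℝ) (hη0 : 0 < η) (hη1 : η < 1) :
    ∃ x₁ : ℝ, ∀ x : ℝ, x₁ ≤ x →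
      (∃ q₀ : ℕ, Real.log x < (q₀ : ℝ) ∧
        ∀ y : ℝ, x ^ ((1 : ℝ) / 2) < y → y ≤ x →
          ∀ q : ℕ, 0 < q → (q : ℝ) ≤ x ^ η → ¬ (q₀ ∣ q) →
            ∀ a : ℤ, Int.gcd a (q : ℤ) = 1 →
              (primePi y : ℝ) / (2 * (n : ℝ) * (Nat.totient q : ℝ)) ≤
                ({p : ℕ | p.Prime ∧ (p : ℝ) < y ∧ (p : ℤ) ≡ a [ZMOD (q : ℤ)] ∧
                  SplitsModLinear f p}.ncard : ℝ)) →
      ∀ L : ℕ, 0 < L → Squarefree L →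
        (∀ p : ℕ, p.Prime → p ∣ L → (p : ℝ) ≤ x ^ ((1 - η) / 2)) →
        (∑ q ∈ L.primeFactors, (1 : ℝ) / (q : ℝ)) ≤ (1 - η) / (32 * (n : ℝ)) →
        ∃ k : ℕ, 0 < k ∧ (k : ℝ) ≤ x ^ (1 - η) ∧ Nat.Coprime k L ∧
          ({d : ℕ | d ∣ L ∧ ((d * k + 1 : ℕ) : ℝ) ≤ x ∧ (d * k + 1).Prime ∧
              SplitsModLinear f (d * k + 1)}.ncard : ℝ) ≥
            ({d : ℕ | d ∣ L ∧ 1 ≤ d ∧ (d : ℝ) ≤ x ^ η}.ncard : ℝ) /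
              (8 * (n : ℝ) * Real.log x) := by
  classical
  have hfd : FiniteDimensional ℚ K :=
    Polynomial.IsSplittingField.finiteDimensional K (f.map (Int.castRingHom ℚ))
  have hn1 : 1 ≤ n := by
    rw [hn]; exact Module.finrank_pos
  obtain ⟨x₁, hx₁⟩ := PV.thresholds n η hη1
  refine ⟨x₁, fun x hx => ?_⟩
  obtain ⟨hxb, hE1, hE2, hE3⟩ := hx₁ x hx
  rintro ⟨q₀, hq₀, H⟩ L hL hLsq hLp hLs
  have hx0 : 0 < x := by linarith
  have hlog1 : 1 ≤ Real.log x := by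
    rw [Real.le_log_iff_exp_le hx0]
    have := Real.exp_one_lt_d9
    linarith
  have hq₀1 : 1 < q₀ := by
    have : (1 : ℝ) < q₀ := by linarith
    exact_mod_cast this
  by_cases hη : 1 / 2 ≤ η
  · exact (PV.large_eta f n hn1 η hη x hxb q₀ hq₀1 H).elim
  rw [not_le] at hη
  have hnR : (1 : ℝ) ≤ n := by exact_mod_cast hn1
  set X := x ^ (1 - η) with hX
  have hX0 : 0 < X := by rw [hX]; positivity
  have hxηX : x ^ η * X = x := by
    rw [hX, ← Real.rpow_add hx0]; simp
  set D := L.divisors.filter (fun d : ℕ => (d : ℝ) ≤ x ^ η) with hD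
  set D' := L.divisors.filter (fun d : ℕ => (d : ℝ) ≤ x ^ η ∧ ¬ q₀ ∣ d) with hD'
  have hhalf : (D.card : ℝ) ≤ 2 * (D'.card : ℝ) := PV.half_count L q₀ (x ^ η) hLsq hq₀1
  have hDset : {d : ℕ | d ∣ L ∧ 1 ≤ d ∧ (d : ℝ) ≤ x ^ η} = (D : Set ℕ) := by
    ext d
    simp only [hD, Set.mem_ofPred_eq, Finset.coe_filter, Nat.mem_divisors]
    constructor
    · rintro ⟨h1, _, h3⟩; exact ⟨⟨h1, hL.ne'⟩, h3⟩
    · rintro ⟨⟨h1, _⟩, h3⟩; exact ⟨h1, Nat.pos_of_dvd_of_pos h1 hL, h3⟩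
  rw [hDset, Set.ncard_coe_finset]
  have hDpos : 0 < D.card := by
    rw [Finset.card_pos]
    refine ⟨1, ?_⟩
    simp only [hD, Finset.mem_filter, Nat.one_mem_divisors, Nat.cast_one]
    exact ⟨hL.ne', Real.one_le_rpow (by linarith) hη0.le⟩
  have hDposR : (0 : ℝ) < D.card := by exact_mod_cast hDpos
  have hgood : ∀ d ∈ D', X / (8 * n * Real.log x) ≤ ((PV.good f L X d).card : ℝ) := by
    intro d hd
    simp only [hD', Finset.mem_filter, Nat.mem_divisors] at hd
    obtain ⟨⟨hdL, _⟩, hdx, hqd⟩ := hd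
    have hd0 : 0 < d := Nat.pos_of_dvd_of_pos hdL hL
    have hdR : (1 : ℝ) ≤ d := by exact_mod_cast hd0
    apply PV.per_d f n L d x η X hn1 hη0 hη1 (by linarith) hX hE1 hE2 hE3 hL.ne' hdL hdx hLp hLs
    refine H (d * X) ?_ ?_ d hd0 hdx hqd 1 (by simp)
    · calc x ^ ((1 : ℝ) / 2) < X := Real.rpow_lt_rpow_of_exponent_lt (by linarith) (by linarith)
        _ ≤ d * X := by nlinarith
    · calc (d : ℝ) * X ≤ x ^ η * X := by gcongr
        _ = x := hxηX
  set Ks := (Finset.Icc 1 ⌊X⌋₊).filter (fun k => Even k ∧ k.Coprime L) with hKs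
  have hKcard : (Ks.card : ℝ) ≤ X / 2 := by
    refine le_trans ?_ (PV.evens_card X hX0.le)
    have : Ks ⊆ (Finset.Icc 1 ⌊X⌋₊).filter (fun k => Even k) := by
      intro k hk
      simp only [hKs, Finset.mem_filter] at hk ⊢
      exact ⟨hk.1, hk.2.1⟩
    exact_mod_cast Finset.card_le_card this
  have hgsub : ∀ d, PV.good f L X d ⊆ Ks := by
    intro d k hk
    simp only [PV.good, hKs, Finset.mem_filter] at hk ⊢
    exact ⟨hk.1, hk.2.1, hk.2.2.1⟩
  have hdouble : ∑ d ∈ D', (PV.good f L X d).card =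
      ∑ k ∈ Ks, (D'.filter (fun d => k ∈ PV.good f L X d)).card := by
    have h1 : ∀ d ∈ D', (PV.good f L X d).card = ∑ k ∈ Ks, if k ∈ PV.good f L X d then 1 else 0 := by
      intro d _
      rw [← Finset.card_filter, Finset.filter_mem_eq_inter, Finset.inter_eq_right.2 (hgsub d)]
    rw [Finset.sum_congr rfl h1, Finset.sum_comm]
    apply Finset.sum_congr rfl
    intro k _
    rw [Finset.card_filter]
  set T : ℝ := (D.card : ℝ) / (8 * n * Real.log x) with hT
  have hden : (0 : ℝ) < 8 * n * Real.log x := by positivity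
  have hTpos : 0 < T := by positivity
  obtain ⟨k, hk, hkT⟩ : ∃ k ∈ Ks, T ≤ ((D'.filter (fun d => k ∈ PV.good f L X d)).card : ℝ) := by
    by_contra hcon
    push Not at hcon
    have hlow : X / 2 * T ≤ ∑ k ∈ Ks, ((D'.filter (fun d => k ∈ PV.good f L X d)).card : ℝ) := by
      have h1 : ∑ k ∈ Ks, ((D'.filter (fun d => k ∈ PV.good f L X d)).card : ℝ) =
          ∑ d ∈ D', ((PV.good f L X d).card : ℝ) := by exact_mod_cast hdouble.symm
      rw [h1]
      calc X / 2 * T = (D.card : ℝ) / 2 * (X / (8 * n * Real.log x)) := by rw [hT]; ring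
        _ ≤ (D'.card : ℝ) * (X / (8 * n * Real.log x)) := by
            gcongr; linarith
        _ = ∑ d ∈ D', X / (8 * n * Real.log x) := by rw [Finset.sum_const, nsmul_eq_mul]
        _ ≤ _ := Finset.sum_le_sum hgood
    have hne : Ks.Nonempty := by
      rw [Finset.nonempty_iff_ne_empty]
      intro h
      rw [h, Finset.sum_empty] at hlow
      have : 0 < X / 2 * T := by positivity
      linarith
    have hup := Finset.sum_lt_sum_of_nonempty hne hcon
    rw [Finset.sum_const, nsmul_eq_mul] at hup
    have : (Ks.card : ℝ) * T ≤ X / 2 * T := by gcongr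
    linarith
  simp only [hKs, Finset.mem_filter, Finset.mem_Icc] at hk
  refine ⟨k, hk.1.1, ?_, hk.2.2, ?_⟩
  · exact (Nat.le_floor_iff hX0.le).1 hk.1.2
  · refine le_trans hkT ?_
    have hfin : {d : ℕ | d ∣ L ∧ ((d * k + 1 : ℕ) : ℝ) ≤ x ∧ (d * k + 1).Prime ∧
              SplitsModLinear f (d * k + 1)}.Finite := by
      apply (L.divisors.finite_toSet).subset
      rintro d ⟨h1, _⟩
      simp [h1, hL.ne']
    have hsub : ((D'.filter (fun d => k ∈ PV.good f L X d) : Finset ℕ) : Set ℕ) ⊆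
        {d : ℕ | d ∣ L ∧ ((d * k + 1 : ℕ) : ℝ) ≤ x ∧ (d * k + 1).Prime ∧
              SplitsModLinear f (d * k + 1)} := by
      intro d hd
      simp only [hD', PV.good, Finset.coe_filter, Finset.mem_filter, Nat.mem_divisors,
        Set.mem_ofPred_eq] at hd
      obtain ⟨⟨⟨hdL, _⟩, hdx, _⟩, _, _, _, hle, hp, hspl⟩ := hd
      refine ⟨hdL, hle.trans ?_, hp, hspl⟩
      calc (d : ℝ) * X ≤ x ^ η * X := by gcongr
        _ = x := hxηX
    have := Set.ncard_le_ncard hsub hfin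
    rw [Set.ncard_coe_finset] at this
    exact_mod_cast this
end
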